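/- arXiv:2009.09221 — 7 statements merged into one kernel-verified Lean document; each statement's English description precedes it below -/
import Mathlib

section
/- Let G be a countably infinite, locally finite, strongly connected directed graph, let H be a horoball in G and let v ∈ H. Then there exists a Busemann ball B in G with v ∈ B ⊆ H. -/
/-!
Write `d(x, y)` for the directed distance and let `H` be the limit of the balls of radius `n i`
around `c i`. Eventually `d(c i, v) ≤ n i`, while `d(c i, v) → ∞` because `v` reaches a vertex
outside `H`. Follow geodesics from `c i` to `v` backwards from `v`: in-neighborhoods are finite,
so by compactness there is a single backward walk `γ` from `γ 0 = v` such that, for each `r`,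
`d(c i, γ r) + r ≤ d(c i, v)` for infinitely many `i`. By the triangle inequality through `γ r`,
this one inequality shows both that `d(γ r, v) ≥ r`, so that `γ` is geodesic, and that the ball of
radius `r` around `γ r` lies in the ball of radius `n i` around `c i`, so that it lies in `H`.
-/

open Filter Set

/-- The map `φ_G` on subsets of the vertex set of a directed graph with edge
relation `E`: `φ_G(W) = W ∪ {v : ∃ w ∈ W, (w,v) ∈ E}`. -/
def phiG {V : Type*} (E : V → V → Prop) (W : Set V) : Set V :=
  W ∪ {v | ∃ w ∈ W, E w v}

/-- A directed graph is locally finite if every vertex has finitely many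
out-neighbors and finitely many in-neighbors. -/
def LocallyFiniteGraph {V : Type*} (E : V → V → Prop) : Prop :=
  ∀ v : V, {w | E v w}.Finite ∧ {w | E w v}.Finite

/-- A directed graph is strongly connected if every vertex is reachable from
every other vertex by a directed path. -/
def StronglyConnectedGraph {V : Type*} (E : V → V → Prop) : Prop :=
  ∀ v w : V, ∃ n : ℕ, w ∈ (phiG E)^[n] {v}

/-- Convergence of a sequence of subsets in the product topology on
`{0,1}^V`: for every vertex, membership eventually agrees with the limit. -/
def ConvergesTo {V : Type*} (s : ℕ → Set V) (S : Set V) : Prop :=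
  ∀ v : V, ∀ᶠ i in atTop, (v ∈ s i ↔ v ∈ S)

/-- A horoball: a nonempty proper subset of `V` which is a limit of balls
`φ_G^{n_i}({c_i})` with radii `n_i → ∞`. -/
def IsHoroball {V : Type*} (E : V → V → Prop) (H : Set V) : Prop :=
  H.Nonempty ∧ H ≠ univ ∧
    ∃ (c : ℕ → V) (n : ℕ → ℕ), Tendsto n atTop atTop ∧
      ConvergesTo (fun i => (phiG E)^[n i] {c i}) H

/-- A geodesic ray: a sequence `γ` of vertices such that for `i > j` the
shortest directed path from `γ i` to `γ j` has length exactly `i - j`. -/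
def IsGeodesicRay {V : Type*} (E : V → V → Prop) (γ : ℕ → V) : Prop :=
  ∀ i j : ℕ, j < i →
    γ j ∈ (phiG E)^[i - j] {γ i} ∧ ∀ n : ℕ, γ j ∈ (phiG E)^[n] {γ i} → i - j ≤ n

/-- A Busemann ball: a set of the form `⋃ r, φ_G^r({γ r})` for a geodesic ray
`γ`, which is neither empty nor the whole vertex set. -/
def IsBusemannBall {V : Type*} (E : V → V → Prop) (B : Set V) : Prop :=
  B ≠ ∅ ∧ B ≠ univ ∧
    ∃ γ : ℕ → V, IsGeodesicRay E γ ∧ B = ⋃ r : ℕ, (phiG E)^[r] {γ r}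

section Konig

variable {α ι : Type*} {l : Filter ι} {R : α → α → Prop}

/-- König's lemma along a filter: a property that holds frequently along `l` passes to one of
finitely many alternatives, so it can be kept while choosing the next term. -/
lemma exists_seq_forall_frequently (hR : ∀ x, {y | R x y}.Finite) {P : ℕ → ι → α → Prop} {a : α}
    (hzero : ∃ᶠ i in l, P 0 i a)
    (hsucc : ∀ r, ∀ᶠ i in l, ∀ x, P r i x → ∃ y, R x y ∧ P (r + 1) i y) :
    ∃ u : ℕ → α, u 0 = a ∧ (∀ r, R (u r) (u (r + 1))) ∧ ∀ r, ∃ᶠ i in l, P r i (u r) := by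
  have hstep : ∀ r x, (∃ᶠ i in l, P r i x) → ∃ y, R x y ∧ ∃ᶠ i in l, P (r + 1) i y :=
    fun r x hx => (hR x).frequently_exists.1 <|
      (hx.and_eventually (hsucc r)).mono fun _ hi => hi.2 x hi.1
  choose! f hRf hf using hstep
  let u : ℕ → α := fun r => Nat.rec a f r
  have hu : ∀ r, ∃ᶠ i in l, P r i (u r) := fun r => by
    induction r with
    | zero => exact hzero
    | succ r ih => exact hf r (u r) ih
  exact ⟨u, rfl, fun r => hRf r (u r) (hu r), hu⟩

end Konig

section DirectedDistance

variable {V : Type*} {E : V → V → Prop}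

lemma phiG_monotone : Monotone (phiG E) := fun _ _ hAB =>
  union_subset_union hAB fun _ ⟨w, hw, hwx⟩ => ⟨w, hAB hw, hwx⟩

lemma mem_phiG_iff_exists_mem_phiG_singleton {W : Set V} {x : V} :
    x ∈ phiG E W ↔ ∃ y ∈ W, x ∈ phiG E {y} := by
  constructor
  · rintro (hx | ⟨w, hw, hwx⟩)
    · exact ⟨x, hx, Or.inl rfl⟩
    · exact ⟨w, hw, Or.inr ⟨w, rfl, hwx⟩⟩
  · rintro ⟨y, hy, hxy⟩
    exact phiG_monotone (singleton_subset_iff.2 hy) hxy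

lemma finite_setOf_mem_phiG_singleton {x : V} (hx : {w | E w x}.Finite) :
    {y | x ∈ phiG E {y}}.Finite := by
  refine (hx.insert x).subset ?_
  rintro y (rfl | ⟨_, rfl, hyx⟩)
  · exact mem_insert _ _
  · exact mem_insert_of_mem _ hyx

/-- The directed distance from `u` to `v`: the length of a shortest directed path, or `⊤` if there
is none. It is the least radius of a ball around `u` containing `v`. -/
noncomputable def dirDist (E : V → V → Prop) (u v : V) : ℕ∞ :=
  ⨅ (n : ℕ) (_ : v ∈ (phiG E)^[n] {u}), (n : ℕ∞)

lemma dirDist_le_iff {u v : V} {n : ℕ} : dirDist E u v ≤ n ↔ v ∈ (phiG E)^[n] {u} := by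
  refine ⟨fun h => ?_, fun h => iInf₂_le n h⟩
  have hlt : dirDist E u v < (n + 1 : ℕ) := h.trans_lt (by exact_mod_cast n.lt_succ_self)
  simp only [dirDist, iInf_lt_iff, Nat.cast_lt, Nat.lt_succ_iff] at hlt
  obtain ⟨k, hk, hkn⟩ := hlt
  exact Function.monotone_iterate_of_id_le (fun _ => subset_union_left) hkn _ hk

@[simp]
lemma dirDist_self (u : V) : dirDist E u u = 0 :=
  nonpos_iff_eq_zero.1 (dirDist_le_iff (n := 0).2 rfl)

lemma dirDist_triangle (x y z : V) : dirDist E x z ≤ dirDist E x y + dirDist E y z := by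
  cases hxy : dirDist E x y with
  | top => simp only [top_add, le_top]
  | coe a =>
    cases hyz : dirDist E y z with
    | top => simp only [add_top, le_top]
    | coe b =>
      have hy : {y} ⊆ (phiG E)^[a] {x} := singleton_subset_iff.2 (dirDist_le_iff.1 hxy.le)
      have hz : z ∈ (phiG E)^[b + a] {x} := by
        rw [Function.iterate_add_apply]
        exact phiG_monotone.iterate b hy (dirDist_le_iff.1 hyz.le)
      rw [add_comm]
      exact_mod_cast dirDist_le_iff.2 hz

lemma exists_dirDist_le_of_dirDist_le_add_one {u x : V} {k : ℕ} (h : dirDist E u x ≤ (k + 1 : ℕ)) :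
    ∃ y, x ∈ phiG E {y} ∧ dirDist E u y ≤ k := by
  rw [dirDist_le_iff, Function.iterate_succ_apply', mem_phiG_iff_exists_mem_phiG_singleton] at h
  obtain ⟨y, hy, hxy⟩ := h
  exact ⟨y, hxy, dirDist_le_iff.2 hy⟩

lemma exists_dirDist_add_succ_le {c v x : V} {r : ℕ} (hv : dirDist E c v ≠ ⊤)
    (hr : r < dirDist E c v) (hx : dirDist E c x + r ≤ dirDist E c v) :
    ∃ y, x ∈ phiG E {y} ∧ dirDist E c y + (r + 1 : ℕ) ≤ dirDist E c v := by
  lift dirDist E c v to ℕ using hv with m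
  obtain ⟨k, rfl⟩ := Nat.exists_eq_add_of_le' (Nat.succ_le_of_lt (Nat.cast_lt.1 hr))
  have hxk : dirDist E c x ≤ (k + 1 : ℕ) := by
    refine (ENat.add_le_add_iff_right (ENat.natCast_ne_top r)).1 (hx.trans_eq ?_)
    norm_cast
    omega
  obtain ⟨y, hxy, hy⟩ := exists_dirDist_le_of_dirDist_le_add_one hxk
  exact ⟨y, hxy, by push_cast; gcongr⟩

lemma isGeodesicRay_of_le_dirDist {γ : ℕ → V} (hstep : ∀ r, γ r ∈ phiG E {γ (r + 1)})
    (hdist : ∀ r : ℕ, r ≤ dirDist E (γ r) (γ 0)) : IsGeodesicRay E γ := by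
  have hpath : ∀ j k : ℕ, dirDist E (γ (j + k)) (γ j) ≤ k := fun j k => by
    induction k with
    | zero => simp only [add_zero, dirDist_self, zero_le]
    | succ k ih =>
      calc dirDist E (γ (j + (k + 1))) (γ j)
          ≤ dirDist E (γ (j + k + 1)) (γ (j + k)) + dirDist E (γ (j + k)) (γ j) :=
            dirDist_triangle _ _ _
        _ ≤ (1 : ℕ) + k := add_le_add (dirDist_le_iff.2 (hstep (j + k))) ih
        _ = (k + 1 : ℕ) := by rw [add_comm, ← Nat.cast_add]
  intro i j hji
  refine ⟨?_, fun n hn => ?_⟩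
  · have := hpath j (i - j)
    rwa [Nat.add_sub_cancel' hji.le, dirDist_le_iff] at this
  · have hle : (i : ℕ∞) ≤ (n + j : ℕ) :=
      calc (i : ℕ∞) ≤ dirDist E (γ i) (γ 0) := hdist i
        _ ≤ dirDist E (γ i) (γ j) + dirDist E (γ j) (γ 0) := dirDist_triangle _ _ _
        _ ≤ n + j := add_le_add (dirDist_le_iff.2 hn) (by simpa only [zero_add] using hpath 0 j)
        _ = (n + j : ℕ) := (Nat.cast_add n j).symm
    exact Nat.sub_le_of_le_add (Nat.cast_le.1 hle)

lemma le_dirDist_of_dirDist_add_le {c v x : V} {r : ℕ} (hv : dirDist E c v ≠ ⊤)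
    (hx : dirDist E c x + r ≤ dirDist E c v) : r ≤ dirDist E x v :=
  (ENat.add_le_add_iff_left (ne_top_of_le_ne_top hv (le_self_add.trans hx))).1
    (hx.trans (dirDist_triangle c x v))

end DirectedDistance

section Horoball

variable {V : Type*} {E : V → V → Prop} {c : ℕ → V} {n : ℕ → ℕ} {H : Set V} {v w : V}

lemma ConvergesTo.eventually_dirDist_le (hH : ConvergesTo (fun i => (phiG E)^[n i] {c i}) H)
    (hv : v ∈ H) : ∀ᶠ i in atTop, dirDist E (c i) v ≤ n i :=
  (hH v).mono fun _ hi => dirDist_le_iff.2 (hi.2 hv)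

lemma ConvergesTo.eventually_lt_dirDist (hH : ConvergesTo (fun i => (phiG E)^[n i] {c i}) H)
    (hn : Tendsto n atTop atTop) (hw : w ∉ H) {D : ℕ} (hvw : w ∈ (phiG E)^[D] {v}) (r : ℕ) :
    ∀ᶠ i in atTop, r < dirDist E (c i) v := by
  filter_upwards [hH w, hn.eventually_ge_atTop (r + D)] with i hi hri
  by_contra! hle
  refine hw (hi.1 (dirDist_le_iff.1 ?_))
  calc dirDist E (c i) w ≤ dirDist E (c i) v + dirDist E v w := dirDist_triangle _ _ _
    _ ≤ r + D := add_le_add hle (dirDist_le_iff.2 hvw)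
    _ ≤ n i := by exact_mod_cast hri

lemma ConvergesTo.ball_subset (hH : ConvergesTo (fun i => (phiG E)^[n i] {c i}) H)
    (hv : v ∈ H) {x : V} {r : ℕ}
    (hx : ∃ᶠ i in atTop, dirDist E (c i) x + r ≤ dirDist E (c i) v) :
    (phiG E)^[r] {x} ⊆ H := by
  intro z hz
  obtain ⟨i, ⟨hxi, hvi⟩, hzi⟩ :=
    ((hx.and_eventually (hH.eventually_dirDist_le hv)).and_eventually (hH z)).exists
  refine hzi.1 (dirDist_le_iff.1 ?_)
  calc dirDist E (c i) z ≤ dirDist E (c i) x + dirDist E x z := dirDist_triangle _ _ _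
    _ ≤ dirDist E (c i) x + r := by gcongr; exact dirDist_le_iff.2 hz
    _ ≤ n i := hxi.trans hvi

end Horoball

theorem busemann_ball_in_horoball_general {V : Type*} {E : V → V → Prop}
    (hE : ∀ x, {y | E y x}.Finite) {H : Set V} (hH : IsHoroball E H) {v w : V} (hv : v ∈ H)
    (hw : w ∉ H) {D : ℕ} (hvw : w ∈ (phiG E)^[D] {v}) :
    ∃ B : Set V, IsBusemannBall E B ∧ v ∈ B ∧ B ⊆ H := by
  obtain ⟨-, -, c, n, hn, hlim⟩ := hH
  have hfin : ∀ᶠ i in atTop, dirDist E (c i) v ≠ ⊤ :=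
    (hlim.eventually_dirDist_le hv).mono fun i => ne_top_of_le_ne_top (ENat.natCast_ne_top (n i))
  obtain ⟨γ, rfl, hstep, hγ⟩ := exists_seq_forall_frequently (l := atTop)
    (R := fun x y => x ∈ phiG E {y})
    (P := fun (r : ℕ) i x => dirDist E (c i) x + r ≤ dirDist E (c i) v) (a := v)
    (fun x => finite_setOf_mem_phiG_singleton (hE x))
    (Frequently.of_forall fun i => (add_zero (dirDist E (c i) v)).le)
    (fun r => by
      filter_upwards [hfin, hlim.eventually_lt_dirDist hn hw hvw r] with i hi hr x hx
      exact exists_dirDist_add_succ_le hi hr hx)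
  have hgeo : IsGeodesicRay E γ := isGeodesicRay_of_le_dirDist hstep fun r => by
    obtain ⟨i, hri, hi⟩ := ((hγ r).and_eventually hfin).exists
    exact le_dirDist_of_dirDist_add_le hi hri
  have hsub : ⋃ r : ℕ, (phiG E)^[r] {γ r} ⊆ H := iUnion_subset fun r => hlim.ball_subset hv (hγ r)
  have hmem : γ 0 ∈ ⋃ r : ℕ, (phiG E)^[r] {γ r} := mem_iUnion.2 ⟨0, rfl⟩
  exact ⟨_, ⟨(nonempty_of_mem hmem).ne_empty, fun h => hw (hsub (h ▸ mem_univ w)), γ, hgeo, rfl⟩,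
    hmem, hsub⟩

/-- Every point of a horoball is contained in a Busemann ball contained in the
horoball. -/
theorem busemann_ball_in_horoball {V : Type*} [Countable V] [Infinite V]
    (E : V → V → Prop) (hLF : LocallyFiniteGraph E)
    (hSC : StronglyConnectedGraph E)
    (H : Set V) (hH : IsHoroball E H) (v : V) (hv : v ∈ H) :
    ∃ B : Set V, IsBusemannBall E B ∧ v ∈ B ∧ B ⊆ H := by
  obtain ⟨w, hw⟩ := (ne_univ_iff_exists_notMem H).1 hH.2.1
  obtain ⟨D, hD⟩ := hSC v w
  exact busemann_ball_in_horoball_general (fun x => (hLF x).2) hH hv hw hD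
end

section
/- Let G be a countably infinite, locally finite, strongly connected directed graph. The sheltered sets of G satisfy: (a) ∅ and V(G) are sheltered; (b) the intersection of any family of sheltered sets is sheltered; (c) the union of an increasing chain of sheltered sets is sheltered. Moreover, for every W ⊆ V(G), the sheltered hull S_G(W) equals the intersection of all sheltered sets containing W. -/
/-!
The map `φ_G^r` preserves unions, so it is the lower adjoint of a Galois connection whose upper
adjoint is `B ↦ {v | φ_G^r {v} ⊆ B}`; the `r`-sheltered hull `S_G^r` is the associated closure
operator. Since powers of `φ_G` commute, `S_G^r ∘ S_G^s ≤ S_G^(r+s)`, hence `S_G^r` increases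
with `r`. When out-neighborhoods are finite, `φ_G^r {v}` is finite, so each `S_G^r` preserves
directed unions. Therefore `S_G = ⋃ r, S_G^r` also preserves them, and it is idempotent because
`S_G^r (⋃ s, S_G^s W) = ⋃ s, S_G^r (S_G^s W) ⊆ ⋃ s, S_G^(r+s) W`.
-/

open Filter Set

/-- The `r`-sheltered hull of `W`. -/
def shelR {V : Type*} (E : V → V → Prop) (r : ℕ) (W : Set V) : Set V :=
  {v | (phiG E)^[r] {v} ⊆ (phiG E)^[r] W}

/-- The sheltered hull of `W`: the union of the `r`-sheltered hulls over `r ≥ 1`. -/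
def shelHull {V : Type*} (E : V → V → Prop) (W : Set V) : Set V :=
  ⋃ r ∈ {r : ℕ | 1 ≤ r}, shelR E r W

/-- A set is sheltered if it agrees with its sheltered hull. -/
def IsSheltered {V : Type*} (E : V → V → Prop) (W : Set V) : Prop :=
  shelHull E W = W

section Iterates

variable {V : Type*} {E : V → V → Prop}

theorem phiG_subset_iff {A B : Set V} : phiG E A ⊆ B ↔ ∀ a ∈ A, phiG E {a} ⊆ B := by
  simp only [phiG, subset_def, mem_union, mem_ofPred_eq, mem_singleton_iff]
  grind

variable (E) in
theorem subset_phiG_iterate (r : ℕ) (W : Set V) : W ⊆ (phiG E)^[r] W :=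
  Function.id_le_iterate_of_id_le (fun _ => subset_union_left) r W

theorem finite_phiG_iterate (hE : ∀ v, {w | E v w}.Finite) {W : Set V} (hW : W.Finite)
    (r : ℕ) : ((phiG E)^[r] W).Finite := by
  induction r with
  | zero => exact hW
  | succ r ih =>
    rw [Function.iterate_succ_apply']
    have hout : (⋃ w ∈ (phiG E)^[r] W, {v | E w v}).Finite := ih.biUnion fun w _ => hE w
    exact ih.union (hout.subset fun _ ⟨_, hw, hwv⟩ => mem_biUnion hw hwv)

variable (E) in
/-- The erosion of `B` by balls of radius `r`: the vertices whose `r`-ball lies in `B`. It is the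
upper adjoint of the dilation `φ_G^r`, and `shelR E r W` is by definition the erosion of the
dilation of `W`. -/
def erosion (r : ℕ) (B : Set V) : Set V :=
  {v | (phiG E)^[r] {v} ⊆ B}

variable (E) in
theorem gc_phiG_iterate_erosion (r : ℕ) : GaloisConnection (phiG E)^[r] (erosion E r) := by
  induction r with
  | zero => simp [GaloisConnection, erosion, subset_def]
  | succ r ih =>
    intro A B
    calc (phiG E)^[r] (phiG E A) ⊆ B
      _ ↔ phiG E A ⊆ erosion E r B := ih _ _
      _ ↔ ∀ a ∈ A, phiG E {a} ⊆ erosion E r B := phiG_subset_iff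
      _ ↔ ∀ a ∈ A, (phiG E)^[r] (phiG E {a}) ⊆ B := forall₂_congr fun _ _ => (ih _ _).symm

end Iterates

section ShelteredHull

variable {V : Type*} (E : V → V → Prop)

theorem subset_shelR (r : ℕ) (W : Set V) : W ⊆ shelR E r W :=
  (gc_phiG_iterate_erosion E r).le_u_l W

theorem monotone_shelR (r : ℕ) : Monotone (shelR E r) :=
  (gc_phiG_iterate_erosion E r).monotone_u.comp (gc_phiG_iterate_erosion E r).monotone_l

theorem phiG_iterate_shelR (r : ℕ) (W : Set V) :
    (phiG E)^[r] (shelR E r W) = (phiG E)^[r] W :=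
  (gc_phiG_iterate_erosion E r).l_u_l_eq_l W

theorem shelR_shelR_subset (r s : ℕ) (W : Set V) :
    shelR E r (shelR E s W) ⊆ shelR E (r + s) W := by
  have iterate_comm : ∀ A, (phiG E)^[s] ((phiG E)^[r] A) = (phiG E)^[r] ((phiG E)^[s] A) :=
    Function.Commute.iterate_iterate_self (phiG E) s r
  refine (gc_phiG_iterate_erosion E (r + s)).le_u (Eq.subset ?_)
  calc (phiG E)^[r + s] (shelR E r (shelR E s W))
    _ = (phiG E)^[s] ((phiG E)^[r] (shelR E r (shelR E s W))) := by
      rw [iterate_comm, Function.iterate_add_apply]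
    _ = (phiG E)^[r] ((phiG E)^[s] (shelR E s W)) := by rw [phiG_iterate_shelR, iterate_comm]
    _ = (phiG E)^[r + s] W := by rw [phiG_iterate_shelR, Function.iterate_add_apply]

theorem monotone_shelR_radius (W : Set V) : Monotone fun r => shelR E r W :=
  monotone_nat_of_le_succ fun r => (monotone_shelR E r (subset_shelR E 1 W)).trans
    (shelR_shelR_subset E r 1 W)

theorem shelHull_eq_iUnion_shelR (W : Set V) : shelHull E W = ⋃ r, shelR E r W :=
  Subset.antisymm (iUnion₂_subset_iUnion _ _) <| iUnion_subset fun r =>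
    (monotone_shelR_radius E W r.le_succ).trans <|
      subset_biUnion_of_mem (u := fun r => shelR E r W) r.succ_pos

theorem subset_shelHull (W : Set V) : W ⊆ shelHull E W :=
  (subset_shelR E 1 W).trans <|
    subset_biUnion_of_mem (u := fun r => shelR E r W) (le_refl 1)

theorem monotone_shelHull : Monotone (shelHull E) :=
  fun _ _ h => iUnion₂_mono fun r _ => monotone_shelR E r h

theorem shelR_empty (r : ℕ) : shelR E r ∅ = ∅ := by
  refine eq_empty_of_forall_notMem fun v hv => ?_
  have hball : (phiG E)^[r] {v} ⊆ ∅ := hv.trans_eq (gc_phiG_iterate_erosion E r).l_bot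
  exact hball (subset_phiG_iterate E r {v} rfl)

theorem isSheltered_empty : IsSheltered E ∅ := by
  simp only [IsSheltered, shelHull_eq_iUnion_shelR, shelR_empty, iUnion_empty]

end ShelteredHull

section FiniteOutNeighborhoods

variable {V : Type*} {E : V → V → Prop}

theorem shelR_iUnion_of_directed (hE : ∀ v, {w | E v w}.Finite) {ι : Type*} [Nonempty ι]
    {W : ι → Set V} (hW : Directed (· ⊆ ·) W) (r : ℕ) :
    shelR E r (⋃ i, W i) = ⋃ i, shelR E r (W i) := by
  refine Subset.antisymm (fun v hv => ?_) (monotone_shelR E r).le_map_iSup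
  have hfin : ((phiG E)^[r] {v}).Finite := finite_phiG_iterate hE (finite_singleton v) r
  have hcover : (phiG E)^[r] {v} ⊆ ⋃ i, (phiG E)^[r] (W i) :=
    hv.trans (gc_phiG_iterate_erosion E r).l_iSup.subset
  have hdir : Directed (· ⊆ ·) fun i => (phiG E)^[r] (W i) :=
    hW.mono_comp _ (gc_phiG_iterate_erosion E r).monotone_l
  lift (phiG E)^[r] {v} to Finset V using hfin with ball hball
  obtain ⟨i, hi⟩ := hdir.exists_mem_subset_of_finset_subset_biUnion hcover
  exact mem_iUnion.2 ⟨i, hball.symm.trans_subset hi⟩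

theorem shelHull_iUnion_of_directed (hE : ∀ v, {w | E v w}.Finite) {ι : Type*} [Nonempty ι]
    {W : ι → Set V} (hW : Directed (· ⊆ ·) W) :
    shelHull E (⋃ i, W i) = ⋃ i, shelHull E (W i) := by
  simp only [shelHull_eq_iUnion_shelR, shelR_iUnion_of_directed hE hW]
  exact iUnion_comm _

theorem isSheltered_sUnion_of_directedOn (hE : ∀ v, {w | E v w}.Finite) {𝓒 : Set (Set V)}
    (h𝓒 : DirectedOn (· ⊆ ·) 𝓒) (h : ∀ W ∈ 𝓒, IsSheltered E W) : IsSheltered E (⋃₀ 𝓒) := by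
  rcases 𝓒.eq_empty_or_nonempty with rfl | hne
  · simpa only [sUnion_empty] using isSheltered_empty E
  have := hne.to_subtype
  calc shelHull E (⋃₀ 𝓒)
    _ = ⋃ W : 𝓒, shelHull E W := by
      rw [sUnion_eq_iUnion, shelHull_iUnion_of_directed hE h𝓒.directed_val]
    _ = ⋃ W : 𝓒, W := iUnion_congr fun W => h W W.2
    _ = ⋃₀ 𝓒 := sUnion_eq_iUnion.symm

theorem shelHull_shelHull_subset (hE : ∀ v, {w | E v w}.Finite) (W : Set V) :
    shelHull E (shelHull E W) ⊆ shelHull E W := by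
  simp only [shelHull_eq_iUnion_shelR,
    shelR_iUnion_of_directed hE (monotone_shelR_radius E W).directed_le]
  exact iUnion₂_subset fun r s =>
    (shelR_shelR_subset E r s W).trans (subset_iUnion (fun t => shelR E t W) (r + s))

/-- The sheltered hull as a closure operator; its closed sets are, by definition, the sheltered
sets. -/
def shelHullClosure (hE : ∀ v, {w | E v w}.Finite) : ClosureOperator (Set V) :=
  .mk' (shelHull E) (monotone_shelHull E) (subset_shelHull E) (shelHull_shelHull_subset hE)

theorem sheltered_convexity_structure_general (hE : ∀ v, {w | E v w}.Finite) :
    (IsSheltered E (∅ : Set V) ∧ IsSheltered E (univ : Set V)) ∧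
    (∀ 𝓜 : Set (Set V), (∀ W ∈ 𝓜, IsSheltered E W) → IsSheltered E (⋂₀ 𝓜)) ∧
    (∀ 𝓒 : Set (Set V), DirectedOn (· ⊆ ·) 𝓒 → (∀ W ∈ 𝓒, IsSheltered E W) →
      IsSheltered E (⋃₀ 𝓒)) ∧
    (∀ W : Set V, shelHull E W = ⋂₀ {M : Set V | IsSheltered E M ∧ W ⊆ M}) := by
  refine ⟨⟨isSheltered_empty E, (shelHullClosure hE).closure_top⟩,
    fun _ h => ClosureOperator.sInf_isClosed (c := shelHullClosure hE) h,
    fun _ => isSheltered_sUnion_of_directedOn hE, fun W => ?_⟩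
  simp only [and_comm (a := IsSheltered E _)]
  exact ((shelHullClosure hE).closure_isGLB W).sInf_eq.symm

end FiniteOutNeighborhoods

/-- The sheltered sets form an abstract convexity structure: `∅` and `V` are
sheltered, arbitrary intersections of sheltered sets are sheltered, unions of
increasing chains of sheltered sets are sheltered, and the sheltered hull of a
set is the intersection of all sheltered sets containing it. -/
theorem sheltered_convexity_structure {V : Type*} [Countable V] [Infinite V]
    (E : V → V → Prop) (hLF : LocallyFiniteGraph E)
    (hSC : StronglyConnectedGraph E) :
    (IsSheltered E (∅ : Set V) ∧ IsSheltered E (univ : Set V)) ∧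
    (∀ 𝓜 : Set (Set V), (∀ W ∈ 𝓜, IsSheltered E W) → IsSheltered E (⋂₀ 𝓜)) ∧
    (∀ 𝓒 : Set (Set V), IsChain (· ⊆ ·) 𝓒 → (∀ W ∈ 𝓒, IsSheltered E W) →
      IsSheltered E (⋃₀ 𝓒)) ∧
    (∀ W : Set V, shelHull E W = ⋂₀ {M : Set V | IsSheltered E M ∧ W ⊆ M}) := by
  have ⟨hbounds, hInter, hUnion, hHull⟩ := sheltered_convexity_structure_general fun v => (hLF v).1
  exact ⟨hbounds, hInter, fun 𝓒 h𝓒 => hUnion 𝓒 h𝓒.directedOn, hHull⟩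
end

section
/- Let (Γ,A) be a finitely generated group. If (Γ,A) has only finitely many dead ends, then S_A(A^n) = A^n for all sufficiently large n. -/
/-!
If `v * A ⊆ A ^ (m + 1)` but `v ∉ A ^ m`, then `v` has length exactly `m + 1` and is therefore a
dead end. So once `A ^ n` contains all dead ends, each ball `A ^ m` with `n ≤ m` is its own
`1`-sheltered hull. Radius `r + 1` reduces to radius `r`: if `v * A ^ (r + 1) ⊆ A ^ (n + r + 1)`,
then `v * A ^ r` lies in the `1`-sheltered hull of `A ^ (n + r)`, hence in `A ^ (n + r)` itself.
-/

open Filter Set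
open scoped Pointwise

/-- A finite subset `A` of a group positively generates it if every element is
a product of `n ≥ 1` elements of `A`. -/
def PosGen {Γ : Type*} [Group Γ] (A : Set Γ) : Prop :=
  ∀ g : Γ, ∃ n : ℕ, 1 ≤ n ∧ g ∈ A ^ n

/-- The word length `|g|_A = min {n : g ∈ A^n}` (with `A^0 = {1}`). -/
noncomputable def wlen {Γ : Type*} [Group Γ] (A : Set Γ) (g : Γ) : ℕ :=
  sInf {n : ℕ | g ∈ A ^ n}

/-- `g` is a dead end of depth at least `n` for `(Γ, A)` if `g A^n ⊆ A^{|g|_A}`. -/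
def IsDeadEndDepth {Γ : Type*} [Group Γ] (A : Set Γ) (g : Γ) (n : ℕ) : Prop :=
  {g} * A ^ n ⊆ A ^ wlen A g

/-- The `r`-sheltered hull of `W` with respect to `A`:
`S_A^r(W) = {v : v A^r ⊆ W A^r}`. -/
def shelRA {Γ : Type*} [Group Γ] (A : Set Γ) (r : ℕ) (W : Set Γ) : Set Γ :=
  {v | {v} * A ^ r ⊆ W * A ^ r}

/-- The sheltered hull `S_A(W) = ⋃_{r ≥ 1} S_A^r(W)`. -/
def shelHullA {Γ : Type*} [Group Γ] (A : Set Γ) (W : Set Γ) : Set Γ :=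
  ⋃ r ∈ {r : ℕ | 1 ≤ r}, shelRA A r W

section

variable {Γ : Type*} [Group Γ] {A W : Set Γ} {g v : Γ} {m n : ℕ}

theorem wlen_le_of_mem_pow (h : g ∈ A ^ n) : wlen A g ≤ n :=
  Nat.sInf_le h

theorem mem_pow_wlen (h : g ∈ A ^ n) : g ∈ A ^ wlen A g :=
  Nat.sInf_mem (s := {k | g ∈ A ^ k}) ⟨n, h⟩

theorem mem_pow_of_wlen_le (hone : 1 ∈ A) (h : g ∈ A ^ m) (hle : wlen A g ≤ n) : g ∈ A ^ n :=
  pow_subset_pow_right hone hle (mem_pow_wlen h)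

theorem IsDeadEndDepth.mem_pow_wlen (hone : 1 ∈ A) (h : IsDeadEndDepth A g n) :
    g ∈ A ^ wlen A g :=
  h (subset_mul_left {g} (one_mem_pow hone) rfl)

theorem subset_shelRA_iff {U : Set Γ} {r : ℕ} : U ⊆ shelRA A r W ↔ U * A ^ r ⊆ W * A ^ r := by
  simp only [shelRA, mul_subset_iff, mem_singleton_iff, forall_eq, subset_def (s := U),
    mem_ofPred_eq]

theorem subset_shelRA (r : ℕ) : W ⊆ shelRA A r W :=
  subset_shelRA_iff.2 Subset.rfl

theorem subset_shelHullA : W ⊆ shelHullA A W :=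
  (subset_shelRA 1).trans (subset_iUnion₂ (s := fun r _ => shelRA A r W) 1 (le_refl 1))

theorem shelRA_zero : shelRA A 0 W = W := by
  simp [shelRA]

theorem mem_shelRA_add_iff {r s : ℕ} :
    v ∈ shelRA A (r + s) W ↔ {v} * A ^ r ⊆ shelRA A s (W * A ^ r) := by
  rw [subset_shelRA_iff, mul_assoc, mul_assoc, ← pow_add]
  rfl

theorem isDeadEndDepth_one_of_mem_shelRA_one_pow (hone : 1 ∈ A) (hv : v ∈ shelRA A 1 (A ^ m))
    (hvm : v ∉ A ^ m) : IsDeadEndDepth A v 1 := by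
  have hsub : {v} * A ^ 1 ⊆ A ^ (m + 1) := hv.trans_eq (pow_add A m 1).symm
  have hmem : v ∈ A ^ (m + 1) := hsub (subset_mul_left {v} (one_mem_pow hone) rfl)
  have hlt : m < wlen A v := not_le.1 fun hle => hvm (mem_pow_of_wlen_le hone hmem hle)
  have hlen : wlen A v = m + 1 := (wlen_le_of_mem_pow hmem).antisymm hlt
  rwa [IsDeadEndDepth, hlen]

theorem shelRA_one_pow_subset (hone : 1 ∈ A) (hDE : {g | IsDeadEndDepth A g 1} ⊆ A ^ m) :
    shelRA A 1 (A ^ m) ⊆ A ^ m := fun _ hv =>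
  by_contra fun hvm => hvm (hDE (isDeadEndDepth_one_of_mem_shelRA_one_pow hone hv hvm))

theorem shelRA_pow_subset (hone : 1 ∈ A) (hDE : {g | IsDeadEndDepth A g 1} ⊆ A ^ n) (r : ℕ) :
    shelRA A r (A ^ n) ⊆ A ^ n := by
  induction r with
  | zero => exact shelRA_zero.subset
  | succ r ih =>
    intro v hv
    have hDE' : {g | IsDeadEndDepth A g 1} ⊆ A ^ (n + r) :=
      hDE.trans (pow_subset_pow_right hone (Nat.le_add_right n r))
    refine ih (?_ : {v} * A ^ r ⊆ A ^ n * A ^ r)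
    calc {v} * A ^ r ⊆ shelRA A 1 (A ^ n * A ^ r) := mem_shelRA_add_iff.1 hv
      _ = shelRA A 1 (A ^ (n + r)) := by rw [pow_add]
      _ ⊆ A ^ (n + r) := shelRA_one_pow_subset hone hDE'
      _ = A ^ n * A ^ r := pow_add A n r

theorem shelHullA_pow_eq (hone : 1 ∈ A) (hDE : {g | IsDeadEndDepth A g 1} ⊆ A ^ n) :
    shelHullA A (A ^ n) = A ^ n :=
  (iUnion₂_subset fun r _ => shelRA_pow_subset hone hDE r).antisymm subset_shelHullA

theorem shelHull_eq_of_finitely_many_dead_ends_general (hone : 1 ∈ A)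
    (hDE : BddAbove (wlen A '' {g | IsDeadEndDepth A g 1})) :
    ∃ N : ℕ, ∀ n : ℕ, N ≤ n → shelHullA A (A ^ n) = A ^ n := by
  obtain ⟨N, hN⟩ := hDE
  refine ⟨N, fun n hn => shelHullA_pow_eq hone fun g hg => ?_⟩
  exact mem_pow_of_wlen_le hone (hg.mem_pow_wlen hone) ((hN ⟨g, hg, rfl⟩).trans hn)

end

/-- If `(Γ, A)` has only finitely many dead ends, then `S_A(A^n) = A^n` for
all sufficiently large `n`. -/
theorem shelHull_eq_of_finitely_many_dead_ends {Γ : Type*} [Group Γ]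
    [Countable Γ] [Infinite Γ]
    (A : Set Γ) (hfin : A.Finite) (hone : (1 : Γ) ∈ A) (hgen : PosGen A)
    (hDE : {g : Γ | IsDeadEndDepth A g 1}.Finite) :
    ∃ N : ℕ, ∀ n : ℕ, N ≤ n → shelHullA A (A ^ n) = A ^ n :=
  shelHull_eq_of_finitely_many_dead_ends_general hone (hDE.image (wlen A)).bddAbove
end

section
/- Let G be a countably infinite, locally finite, strongly connected directed graph. Then Fin(φ_G) is exactly the collection of finite subsets of V(G), i.e. a set M ⊆ V(G) satisfies (for all r,n ∈ ℕ the set {N ⊆ V(G) : φ_G^r(N) = φ_G^{r+n}(M)} is finite) if and only if M is finite. -/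
open Filter Set

/-!
If `M` is finite, then `φ^r(N) = φ^{r+n}(M)` forces `N` to be a subset of the finite set
`φ^{r+n}(M)`.

If `M` is infinite, then infinitely many vertices `y` have an in-neighbor `x ≠ y` in `M`, since
in-degrees are finite and at most finitely many vertices of `M` are sinks. Deleting such a `y` from
`φ²(M)` does not change the image under `φ`: the vertex `y` is recovered from `x`, and its
out-neighbors already lie in `φ²(M)`. So already `r = 1`, `n = 2` gives infinitely many `N`.
-/

section

variable {V : Type*} {E : V → V → Prop} {M W : Set V} {x y : V}

/-- The vertices all of whose out-edges are loops; equivalently, the `v` with `φ_G({v}) = {v}`. -/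
def sinks (E : V → V → Prop) : Set V :=
  {v | ∀ w, E v w → w = v}

/-- The vertices that are joined to `M` by an edge from `M` which is not a loop. They may lie in `M`
themselves. -/
def properOutNeighbors (E : V → V → Prop) (M : Set V) : Set V :=
  {y | ∃ x ∈ M, E x y ∧ y ≠ x}

theorem subset_phiG (E : V → V → Prop) (W : Set V) : W ⊆ phiG E W :=
  subset_union_left

theorem phiG_mono (E : V → V → Prop) : Monotone (phiG E) :=
  fun _ _ h => union_subset_union h fun _ ⟨w, hw, hwv⟩ => ⟨w, h hw, hwv⟩

theorem subset_iterate_phiG (E : V → V → Prop) (r : ℕ) (W : Set V) : W ⊆ (phiG E)^[r] W :=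
  Function.id_le_iterate_of_id_le (subset_phiG E) r W

theorem finite_phiG (hout : ∀ v, {w | E v w}.Finite) (hW : W.Finite) : (phiG E W).Finite := by
  refine hW.union ((hW.biUnion fun w _ => hout w).subset ?_)
  rintro v ⟨w, hw, hwv⟩
  exact mem_biUnion hw hwv

theorem finite_iterate_phiG (hout : ∀ v, {w | E v w}.Finite) (hW : W.Finite) (r : ℕ) :
    ((phiG E)^[r] W).Finite :=
  Function.Iterate.rec Set.Finite hW (fun _ => finite_phiG hout) r

theorem finite_setOf_iterate_phiG_eq {S : Set V} (hS : S.Finite) (r : ℕ) :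
    {N | (phiG E)^[r] N = S}.Finite :=
  hS.finite_subsets.subset fun N hN => (subset_iterate_phiG E r N).trans (le_of_eq hN)

theorem phiG_singleton_of_mem_sinks (hx : x ∈ sinks E) : phiG E {x} = {x} := by
  refine Subset.antisymm (union_subset subset_rfl ?_) (subset_phiG E {x})
  rintro w ⟨_, rfl, hw⟩
  exact hx w hw

theorem StronglyConnectedGraph.sinks_eq_empty [Nontrivial V] (hSC : StronglyConnectedGraph E) :
    sinks E = ∅ := by
  refine eq_empty_of_forall_notMem fun x hx => ?_
  obtain ⟨w, hwx⟩ := exists_ne x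
  obtain ⟨n, hn⟩ := hSC x w
  rw [Function.iterate_fixed (phiG_singleton_of_mem_sinks hx)] at hn
  exact hwx hn

theorem properOutNeighbors_mono (E : V → V → Prop) : Monotone (properOutNeighbors E) :=
  fun _ _ h _ ⟨x, hx, hxy⟩ => ⟨x, h hx, hxy⟩

theorem properOutNeighbors_subset_phiG (E : V → V → Prop) (M : Set V) :
    properOutNeighbors E M ⊆ phiG E M :=
  fun _ ⟨x, hx, hxy, _⟩ => Or.inr ⟨x, hx, hxy⟩

theorem infinite_properOutNeighbors (hin : ∀ v, {w | E w v}.Finite)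
    (hM : (M \ sinks E).Infinite) : (properOutNeighbors E M).Infinite := by
  intro hfin
  have hcover : M \ sinks E ⊆ ⋃ y ∈ properOutNeighbors E M, {x | E x y} := by
    rintro x ⟨hxM, hx⟩
    obtain ⟨y, hxy, hyx⟩ : ∃ y, E x y ∧ y ≠ x := by simpa [sinks] using hx
    exact mem_biUnion (show y ∈ properOutNeighbors E M from ⟨x, hxM, hxy, hyx⟩) hxy
  exact hM ((hfin.biUnion fun y _ => hin y).subset hcover)

theorem phiG_sdiff_singleton (hy : y ∈ properOutNeighbors E W) (hyW : phiG E {y} ⊆ W) :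
    phiG E (W \ {y}) = phiG E W := by
  obtain ⟨x, hx, hxy, hyx⟩ := hy
  have hW : W ⊆ phiG E (W \ {y}) := by
    intro v hv
    obtain rfl | hvy := eq_or_ne v y
    · exact Or.inr ⟨x, ⟨hx, hyx.symm⟩, hxy⟩
    · exact Or.inl ⟨hv, hvy⟩
  refine (phiG_mono E sdiff_subset).antisymm (union_subset hW ?_)
  rintro v ⟨w, hw, hwv⟩
  obtain rfl | hwy := eq_or_ne w y
  · exact hW (hyW (Or.inr ⟨w, rfl, hwv⟩))
  · exact Or.inr ⟨w, ⟨hw, hwy⟩, hwv⟩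

theorem injOn_sdiff_singleton (W : Set V) : InjOn (fun y => W \ {y}) W :=
  fun _ hy _ hz h => singleton_injective <|
    (sdiff_right_inj (singleton_subset_iff.2 hy) (singleton_subset_iff.2 hz)).1 h

theorem infinite_setOf_phiG_eq (hM : (properOutNeighbors E M).Infinite) :
    {N | phiG E N = (phiG E)^[3] M}.Infinite := by
  have hM₁ := properOutNeighbors_subset_phiG E M
  have hM₂ : M ⊆ (phiG E)^[2] M := subset_iterate_phiG E 2 M
  have hinj : InjOn (fun y => (phiG E)^[2] M \ {y}) (properOutNeighbors E M) :=
    (injOn_sdiff_singleton _).mono (hM₁.trans (subset_phiG E _))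
  refine (hM.image hinj).mono ?_
  rintro _ ⟨y, hy, rfl⟩
  exact phiG_sdiff_singleton (properOutNeighbors_mono E hM₂ hy)
    (phiG_mono E (singleton_subset_iff.2 (hM₁ hy)))

theorem fin_phiG_iff_finite_general (hLF : LocallyFiniteGraph E) (hsinks : (sinks E).Finite)
    (M : Set V) :
    (∀ r n : ℕ, {N : Set V | (phiG E)^[r] N = (phiG E)^[r + n] M}.Finite) ↔ M.Finite := by
  constructor
  · intro hfin
    by_contra hM
    have hinf := infinite_properOutNeighbors (fun v => (hLF v).2) (Set.Infinite.sdiff hM hsinks)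
    exact infinite_setOf_phiG_eq hinf (hfin 1 2)
  · intro hM r n
    exact finite_setOf_iterate_phiG_eq (finite_iterate_phiG (fun v => (hLF v).1) hM (r + n)) r

end

/-- `Fin(φ_G)` is exactly the collection of finite subsets of the vertex set:
`M` satisfies "for all `r, n`, the set of `N` with `φ_G^r(N) = φ_G^{r+n}(M)` is
finite" if and only if `M` is finite. -/
theorem fin_phiG_iff_finite {V : Type*} [Countable V] [Infinite V]
    (E : V → V → Prop) (hLF : LocallyFiniteGraph E)
    (hSC : StronglyConnectedGraph E) (M : Set V) :
    (∀ r n : ℕ,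
        {N : Set V | (phiG E)^[r] N = (phiG E)^[r + n] M}.Finite) ↔
      M.Finite :=
  fin_phiG_iff_finite_general hLF (hSC.sinks_eq_empty ▸ finite_empty) M
end

section
/- Let (Γ,A) be a finitely generated group and let q ∈ ℕ satisfy A^{-1} ⊆ A^q. Let M be a finite nonempty subset of Γ and let k ≥ 1 with M ⊆ A^k. Then for every r ∈ ℕ with r ≥ 1: |φ_A^{r-1}(M)| ≤ L_A^{(q+1)rk}(φ_A^r(M)) ≤ |S_A^{(q+1)rk}(φ_A^r(M))|. -/
/-!
Let `P = φ_A^{r-1}(M)`, so that `P ⊆ A^n` with `n = k + r - 1` and `(q+1) n ≤ K := (q+1) r k`.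

Every `N` with `N A^K = P A A^K` lies in the sheltered hull `S` of `P A`, which is finite, so there
are at most `2 ^ |S|` such sets.

For the lower bound, let `∂P = P A \ P`. If `∂P A^K = P A A^K`, the sets `T ∪ ∂P` with `T ⊆ P` are
`2 ^ |P|` such `N`. A path from a point of `P` to a point outside `P` crosses `∂P`, so only the
points `x` of `P` have to be reached from `∂P`: we look for `u` with `x u ∈ ∂P` and `u⁻¹ ∈ A^K`.
If `x A^n ⊄ P`, a path of length at most `n` from `x` leaves `P`, at `x u` say, and
`u⁻¹ ∈ A^{qn}`. Otherwise `x A^n = P` by counting, and by translation it remains to leave `A^n`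
from `1`. If `A⁻¹ ⊆ A^n`, any `u ∈ A^{n+1} \ A^n` has `u⁻¹ ∈ A^m` with
`m = min(q,n)(n+1) ≤ (q+1) n`. If `c⁻¹ ∉ A^n` for some `c ∈ A`, a path of length `q` from `1` to
`c⁻¹` leaves `A^n`, and following the rest of it and then `c` leads back to `1` in at most `q + 1`
steps.
-/

open Filter Set
open scoped Pointwise

/-- The Minkowski product map `φ_A(W) = W A`. -/
def phiA {Γ : Type*} [Group Γ] (A : Set Γ) (W : Set Γ) : Set Γ := W * A

/-- `L_A^k(M) = log₂ |{N ⊆ Γ : N A^k = M A^k}|`. -/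
noncomputable def LA {Γ : Type*} [Group Γ] (A : Set Γ) (k : ℕ) (M : Set Γ) : ℝ :=
  Real.logb 2 ({N : Set Γ | N * A ^ k = M * A ^ k}.ncard)

/-- The outer boundary of `P` in the Cayley graph of `A`: the points outside `P` that are reached
from `P` by right multiplication by one element of `A`. -/
def outerBoundary {α : Type*} [Mul α] (A P : Set α) : Set α :=
  (P * A) \ P

/-- The family `𝓛_A^k(W)`, that is, the fiber of `N ↦ N A^k` through `W`. -/
def thickeningFiber {α : Type*} [Monoid α] (A : Set α) (k : ℕ) (W : Set α) : Set (Set α) :=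
  {N | N * A ^ k = W * A ^ k}

section Monoid

variable {α : Type*} [Monoid α] {A P T W : Set α} {k n : ℕ}

lemma finite_pow (hA : A.Finite) (n : ℕ) : (A ^ n).Finite := by
  induction n with
  | zero => simp
  | succ n ih => simpa only [pow_succ] using ih.mul hA

lemma closure_subset_pow (hone : 1 ∈ A) (h : A ^ (n + 1) ⊆ A ^ n) :
    (Submonoid.closure A : Set α) ⊆ A ^ n := by
  intro x hx
  induction hx using Submonoid.closure_induction_right with
  | one => exact one_mem_pow hone
  | mul_right x _ a ha hxn => exact h (pow_succ A n ▸ mul_mem_mul hxn ha)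

lemma not_pow_succ_subset_pow (hA : A.Finite) (hone : 1 ∈ A)
    (hinf : (Submonoid.closure A : Set α).Infinite) (n : ℕ) : ¬A ^ (n + 1) ⊆ A ^ n :=
  fun h ↦ hinf ((finite_pow hA n).subset (closure_subset_pow hone h))

lemma exists_mul_mem_outerBoundary_of_mul_notMem (hone : 1 ∈ A) {x y : α} (hx : x ∈ P)
    (hy : y ∈ A ^ n) (hxy : x * y ∉ P) :
    ∃ u ∈ A ^ n, ∃ v ∈ A ^ n, u * v = y ∧ x * u ∈ outerBoundary A P := by
  induction n generalizing x y with
  | zero =>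
    obtain rfl : y = 1 := by simpa using hy
    exact absurd (by simpa using hx) hxy
  | succ n ih =>
    obtain ⟨a, ha, w, hw, rfl⟩ := mem_mul.1 (pow_succ' A n ▸ hy)
    have hmono : A ^ n ⊆ A ^ (n + 1) := pow_subset_pow_right hone n.le_succ
    by_cases hxa : x * a ∈ P
    · obtain ⟨u, hu, v, hv, rfl, hxu⟩ := ih hxa hw (by rwa [mul_assoc])
      exact ⟨a * u, pow_succ' A n ▸ mul_mem_mul ha hu, v, hmono hv, mul_assoc a u v,
        by rwa [← mul_assoc]⟩
    · exact ⟨a, subset_pow hone n.succ_ne_zero ha, w, hmono hw, rfl, mul_mem_mul hx ha, hxa⟩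

lemma outerBoundary_mul_pow_eq (hone : 1 ∈ A) (hP : P ⊆ outerBoundary A P * A ^ k) :
    outerBoundary A P * A ^ k = P * A * A ^ k := by
  refine (mul_subset_mul_right sdiff_subset).antisymm ?_
  rintro _ ⟨w, hw, y, hy, rfl⟩
  by_cases hwy : w * y ∈ P
  · exact hP hwy
  by_cases hwP : w ∈ P
  · obtain ⟨u, -, v, hv, rfl, hwu⟩ := exists_mul_mem_outerBoundary_of_mul_notMem hone hwP hy hwy
    exact ⟨w * u, hwu, v, hv, mul_assoc w u v⟩
  · exact mul_mem_mul ⟨hw, hwP⟩ hy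

lemma union_outerBoundary_mem_thickeningFiber (hone : 1 ∈ A)
    (hP : P ⊆ outerBoundary A P * A ^ k) (hT : T ⊆ P) :
    T ∪ outerBoundary A P ∈ thickeningFiber A k (P * A) := by
  refine Subset.antisymm (mul_subset_mul_right ?_) ?_
  · exact union_subset (hT.trans (subset_mul_left P hone)) sdiff_subset
  · rw [← outerBoundary_mul_pow_eq hone hP]
    exact mul_subset_mul_right subset_union_right

lemma injOn_union_outerBoundary (A P : Set α) :
    InjOn (fun T ↦ T ∪ outerBoundary A P) (𝒫 P) := by
  have hinv : LeftInvOn (fun N ↦ N ∩ P) (fun T ↦ T ∪ outerBoundary A P) (𝒫 P) := by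
    intro T (hT : T ⊆ P)
    simp only [outerBoundary, union_inter_distrib_right, sdiff_inter_self, union_empty,
      inter_eq_left.2 hT]
  exact hinv.injOn

lemma two_pow_ncard_le_ncard_thickeningFiber (hone : 1 ∈ A) (hPfin : P.Finite)
    (hfiber : (thickeningFiber A k (P * A)).Finite) (hP : P ⊆ outerBoundary A P * A ^ k) :
    2 ^ P.ncard ≤ (thickeningFiber A k (P * A)).ncard := by
  rw [← ncard_powerset P hPfin]
  exact ncard_le_ncard_of_injOn (fun T ↦ T ∪ outerBoundary A P)
    (fun _ hT ↦ union_outerBoundary_mem_thickeningFiber hone hP hT)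
    (injOn_union_outerBoundary A P) hfiber

end Monoid

lemma inv_pow_subset_pow_mul {α : Type*} [DivisionMonoid α] {A : Set α} {m : ℕ}
    (h : A⁻¹ ⊆ A ^ m) (n : ℕ) : (A ^ n)⁻¹ ⊆ A ^ (m * n) := by
  rw [← inv_pow, pow_mul]
  exact pow_subset_pow_left h

section Group

variable {Γ : Type*} [Group Γ] {A M P W : Set Γ} {k n q : ℕ}

lemma smul_outerBoundary (x : Γ) (A P : Set Γ) :
    x • outerBoundary A P = outerBoundary A (x • P) := by
  simp only [outerBoundary, smul_set_sdiff, smul_mul_assoc]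

lemma exists_mem_outerBoundary_pow_inv_mem_pow (hA : A.Finite) (hone : 1 ∈ A)
    (hinf : (Submonoid.closure A : Set Γ).Infinite) (hq : A⁻¹ ⊆ A ^ q) (hn : 1 ≤ n) :
    ∃ u ∈ outerBoundary A (A ^ n), u⁻¹ ∈ A ^ ((q + 1) * n) := by
  by_cases hinv : A⁻¹ ⊆ A ^ n
  · obtain ⟨u, hu, hun⟩ := not_subset.1 (not_pow_succ_subset_pow hA hone hinf n)
    have hmin : A⁻¹ ⊆ A ^ min q n := by rcases min_choice q n with h | h <;> rwa [h]
    have hlen : min q n * (n + 1) ≤ (q + 1) * n := by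
      rw [mul_add_one, add_one_mul]
      gcongr
      exacts [min_le_left q n, min_le_right q n]
    exact ⟨u, ⟨pow_succ A n ▸ hu, hun⟩,
      pow_subset_pow_right hone hlen (inv_pow_subset_pow_mul hmin (n + 1) (inv_mem_inv.2 hu))⟩
  · obtain ⟨c, hc, hcn⟩ := not_subset.1 hinv
    obtain ⟨u, -, v, hv, rfl, hu⟩ :=
      exists_mul_mem_outerBoundary_of_mul_notMem hone (one_mem_pow hone) (hq hc)
        (by rwa [one_mul])
    have hinv_eq : u⁻¹ = v * (u * v)⁻¹ := by group
    refine ⟨u, by rwa [one_mul] at hu, pow_subset_pow_right hone (Nat.le_mul_of_pos_right _ hn) ?_⟩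
    rw [hinv_eq, pow_succ]
    exact mul_mem_mul hv hc

lemma exists_mul_mem_outerBoundary_inv_mem_pow (hA : A.Finite) (hone : 1 ∈ A)
    (hinf : (Submonoid.closure A : Set Γ).Infinite) (hq : A⁻¹ ⊆ A ^ q) (hn : 1 ≤ n)
    (hP : P ⊆ A ^ n) {x : Γ} (hx : x ∈ P) :
    ∃ u, x * u ∈ outerBoundary A P ∧ u⁻¹ ∈ A ^ ((q + 1) * n) := by
  have hAn : (A ^ n).Finite := finite_pow hA n
  by_cases hball : x • A ^ n ⊆ P
  · have hball_eq : x • A ^ n = P :=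
      eq_of_subset_of_ncard_le hball (by simpa only [ncard_smul_set] using ncard_le_ncard hP hAn)
        (hAn.subset hP)
    obtain ⟨u, hu, huinv⟩ := exists_mem_outerBoundary_pow_inv_mem_pow hA hone hinf hq hn
    refine ⟨u, ?_, huinv⟩
    rw [← hball_eq, ← smul_outerBoundary]
    exact smul_mem_smul_set hu
  · obtain ⟨_, ⟨y, hy, rfl⟩, hxy⟩ := not_subset.1 hball
    obtain ⟨u, hu, -, -, -, hxu⟩ := exists_mul_mem_outerBoundary_of_mul_notMem hone hx hy hxy
    exact ⟨u, hxu, pow_subset_pow_right hone (Nat.mul_le_mul_right n q.le_succ)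
      (inv_pow_subset_pow_mul hq n (inv_mem_inv.2 hu))⟩

lemma subset_outerBoundary_mul_pow (hA : A.Finite) (hone : 1 ∈ A)
    (hinf : (Submonoid.closure A : Set Γ).Infinite) (hq : A⁻¹ ⊆ A ^ q) (hn : 1 ≤ n)
    (hP : P ⊆ A ^ n) (hk : (q + 1) * n ≤ k) : P ⊆ outerBoundary A P * A ^ k := by
  intro x hx
  obtain ⟨u, hxu, hu⟩ := exists_mul_mem_outerBoundary_inv_mem_pow hA hone hinf hq hn hP hx
  exact ⟨x * u, hxu, u⁻¹, pow_subset_pow_right hone hk hu, mul_inv_cancel_right x u⟩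

lemma finite_shelRA (hA : A.Finite) (hone : 1 ∈ A) (k : ℕ) (hW : W.Finite) :
    (shelRA A k W).Finite := by
  refine (hW.mul (finite_pow hA k)).subset fun v hv ↦ hv ?_
  simpa using mul_mem_mul (mem_singleton v) (one_mem_pow hone (n := k))

lemma thickeningFiber_subset_powerset_shelRA (A : Set Γ) (k : ℕ) (W : Set Γ) :
    thickeningFiber A k W ⊆ 𝒫 (shelRA A k W) := by
  intro N hN v hv
  exact (mul_subset_mul_right (singleton_subset_iff.2 hv)).trans_eq hN

lemma finite_thickeningFiber (hA : A.Finite) (hone : 1 ∈ A) (k : ℕ) (hW : W.Finite) :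
    (thickeningFiber A k W).Finite :=
  (finite_shelRA hA hone k hW).powerset.subset (thickeningFiber_subset_powerset_shelRA A k W)

lemma ncard_thickeningFiber_le_two_pow_ncard_shelRA (hS : (shelRA A k W).Finite) :
    (thickeningFiber A k W).ncard ≤ 2 ^ (shelRA A k W).ncard := by
  rw [← ncard_powerset _ hS]
  exact ncard_le_ncard (thickeningFiber_subset_powerset_shelRA A k W) hS.powerset

lemma ncard_thickeningFiber_pos (hfiber : (thickeningFiber A k W).Finite) :
    0 < (thickeningFiber A k W).ncard :=
  (ncard_pos hfiber).2 ⟨W, rfl⟩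

lemma natCast_le_LA_iff (hfiber : (thickeningFiber A k W).Finite) :
    (n : ℝ) ≤ LA A k W ↔ 2 ^ n ≤ (thickeningFiber A k W).ncard := by
  have hpos : (0 : ℝ) < (thickeningFiber A k W).ncard :=
    mod_cast ncard_thickeningFiber_pos hfiber
  change (n : ℝ) ≤ Real.logb 2 (thickeningFiber A k W).ncard ↔ _
  rw [Real.le_logb_iff_rpow_le one_lt_two hpos, Real.rpow_natCast]
  norm_cast

lemma LA_le_natCast_iff (hfiber : (thickeningFiber A k W).Finite) :
    LA A k W ≤ n ↔ (thickeningFiber A k W).ncard ≤ 2 ^ n := by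
  have hpos : (0 : ℝ) < (thickeningFiber A k W).ncard :=
    mod_cast ncard_thickeningFiber_pos hfiber
  change Real.logb 2 (thickeningFiber A k W).ncard ≤ n ↔ _
  rw [Real.logb_le_iff_le_rpow one_lt_two hpos, Real.rpow_natCast]
  norm_cast

lemma phiA_iterate_subset_pow (hM : M ⊆ A ^ k) (s : ℕ) : (phiA A)^[s] M ⊆ A ^ (k + s) := by
  induction s with
  | zero => exact hM
  | succ s ih =>
    rw [Function.iterate_succ_apply', ← add_assoc, pow_succ]
    exact mul_subset_mul_right ih

lemma PosGen.closure_eq_top (hgen : PosGen A) : Submonoid.closure A = ⊤ := by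
  refine eq_top_iff.2 fun g _ ↦ ?_
  obtain ⟨n, -, hg⟩ := hgen g
  exact Submonoid.pow_subset Submonoid.subset_closure hg

lemma PosGen.infinite_closure [Infinite Γ] (hgen : PosGen A) :
    (Submonoid.closure A : Set Γ).Infinite := by
  rw [hgen.closure_eq_top, Submonoid.coe_top]
  exact infinite_univ

theorem card_le_LA_le_card_shel_general (hA : A.Finite) (hone : 1 ∈ A)
    (hinf : (Submonoid.closure A : Set Γ).Infinite) (hq : A⁻¹ ⊆ A ^ q) (hn : 1 ≤ n)
    (hP : P ⊆ A ^ n) (hk : (q + 1) * n ≤ k) :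
    (P.ncard : ℝ) ≤ LA A k (phiA A P) ∧
      LA A k (phiA A P) ≤ ((shelRA A k (phiA A P)).ncard : ℝ) := by
  have hPfin : P.Finite := (finite_pow hA n).subset hP
  have hPA : (phiA A P).Finite := hPfin.mul hA
  have hfiber := finite_thickeningFiber hA hone k hPA
  rw [natCast_le_LA_iff hfiber, LA_le_natCast_iff hfiber]
  exact ⟨two_pow_ncard_le_ncard_thickeningFiber hone hPfin hfiber
      (subset_outerBoundary_mul_pow hA hone hinf hq hn hP hk),
    ncard_thickeningFiber_le_two_pow_ncard_shelRA (finite_shelRA hA hone k hPA)⟩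

end Group

/-- For finite nonempty `M ⊆ A^k` and `r ≥ 1`:
`|φ_A^{r-1}(M)| ≤ L_A^{(q+1)rk}(φ_A^r(M)) ≤ |S_A^{(q+1)rk}(φ_A^r(M))|`. -/
theorem card_le_LA_le_card_shel {Γ : Type*} [Group Γ] [Countable Γ] [Infinite Γ]
    (A : Set Γ) (hfin : A.Finite) (hone : (1 : Γ) ∈ A) (hgen : PosGen A)
    (q : ℕ) (hq : A⁻¹ ⊆ A ^ q)
    (M : Set Γ) (hMfin : M.Finite) (hMne : M.Nonempty)
    (k : ℕ) (hk : 1 ≤ k) (hMk : M ⊆ A ^ k)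
    (r : ℕ) (hr : 1 ≤ r) :
    (((phiA A)^[r - 1] M).ncard : ℝ) ≤
        LA A ((q + 1) * r * k) ((phiA A)^[r] M) ∧
      LA A ((q + 1) * r * k) ((phiA A)^[r] M) ≤
        ((shelRA A ((q + 1) * r * k) ((phiA A)^[r] M)).ncard : ℝ) := by
 
  obtain ⟨s, rfl⟩ := Nat.exists_eq_add_of_le' hr
  have hlen : k + s ≤ (s + 1) * k := by nlinarith
  rw [Nat.add_sub_cancel, Function.iterate_succ_apply', mul_assoc (q + 1)]
  exact card_le_LA_le_card_shel_general hfin hone hgen.infinite_closure hq (le_add_right hk)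
    (phiA_iterate_subset_pow hMk s) (Nat.mul_le_mul_left (q + 1) hlen)
end

section
/- Let A₁ ⊆ ℤ^{d₁} and A₂ ⊆ ℤ^{d₂} be finite positively generating sets, both containing 0. If φ_{A₁} : 𝒫(ℤ^{d₁}) → 𝒫(ℤ^{d₁}) and φ_{A₂} : 𝒫(ℤ^{d₂}) → 𝒫(ℤ^{d₂}) are topologically conjugate, then d₁ = d₂ and the d₁-dimensional Lebesgue volume of conv(A₁) equals the d₂-dimensional Lebesgue volume of conv(A₂). -/
/-!
Say that `W` merges with `V` after `n` steps if `W + n • A = V + n • A`. A conjugacy `Φ` maps the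
sets merging with `V` after `n` steps bijectively onto those merging with `Φ V` after `n` steps, so
their number is an invariant.

* It is large when `V = m • A`: by the pigeonhole principle every set between `{m • a | a ∈ A}` and
  `m • A` merges with `m • A` eventually, which gives at least `2 ^ (|m • A| - |A|)` sets.
* It is controlled when `V = F + m • A` with `F` finite: if `W + n • A ⊆ (r + n) • A`, then
  iterating this inclusion shows that `W` lies in the dilate of `conv A` by about `r`. Hence there
  is `C` such that every set merging with `V`, after any number of steps, lies in `(m + C) • A`.

Moreover `Φ` maps finite sets to finite sets: only finitely many sets merge with a given finite set
after `n` steps, whereas for infinite `Q` and suitable `n` infinitely many merge with `Q + A`.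
Comparing the two counts along `Φ (m • A₁) = Φ {0} + m • A₂` yields
`|m • A₁| ≤ |(m + C) • A₂| + |A₁|`. As `|m • A|` is asymptotic to `vol (conv A) * m ^ d`, where the
volume is positive because `A` generates `ℤ^d`, this inequality and the one for `Φ⁻¹` determine both
the dimension and the volume.
-/

open Filter Set MeasureTheory
open scoped Pointwise

/-- The product (cylinder) topology on `𝒫(V) ≅ {0,1}^V`. -/
noncomputable def cylTop (V : Type*) : TopologicalSpace (Set V) :=
  TopologicalSpace.induced
    (fun (S : Set V) (v : V) => @decide (v ∈ S) (Classical.propDecidable _))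
    inferInstance

/-- Topological conjugacy of two self-maps with respect to given topologies. -/
def TopConj {X Y : Type*} (tX : TopologicalSpace X) (tY : TopologicalSpace Y)
    (f : X → X) (g : Y → Y) : Prop :=
  ∃ Φ : X ≃ Y, @Continuous _ _ tX tY Φ ∧ @Continuous _ _ tY tX Φ.symm ∧
    ∀ x : X, Φ (f x) = g (Φ x)

/-- `A ⊆ ℤ^d` is positively generating: every point is in some `n`-fold
Minkowski sum `nA`, `n ≥ 1`. -/
def PosGenZ {d : ℕ} (A : Set (Fin d → ℤ)) : Prop :=
  ∀ g : Fin d → ℤ, ∃ n : ℕ, 1 ≤ n ∧ g ∈ n • A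

/-- The canonical embedding `ℤ^d → ℝ^d`. -/
def coeR {d : ℕ} : (Fin d → ℤ) → (Fin d → ℝ) := fun x i => (x i : ℝ)

lemma ncard_Icc_of_subset {α : Type*} {s t : Set α} (ht : t.Finite) (hst : s ⊆ t) :
    (Icc s t).ncard = 2 ^ (t.ncard - s.ncard) := by
  classical
  lift s to Finset α using ht.subset hst
  lift t to Finset α using ht
  have hIcc : Icc (s : Set α) t = (↑) '' (Finset.Icc s t : Set (Finset α)) := by
    ext u
    refine ⟨fun hu => ?_, ?_⟩
    · lift u to Finset α using t.finite_toSet.subset hu.2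
      exact ⟨u, by simpa using hu, rfl⟩
    · rintro ⟨u, hu, rfl⟩
      simpa using hu
  rw [hIcc, ncard_image_of_injective _ Finset.coe_injective, ncard_coe_finset, ncard_coe_finset,
    ncard_coe_finset, Finset.card_Icc_finset (Finset.coe_subset.mp hst)]

/-! ### Iterated sumsets -/

section AddMonoid

variable {M : Type*} [AddMonoid M] {A : Set M}

lemma finite_nsmul (hA : A.Finite) (n : ℕ) : (n • A).Finite := by
  induction n with
  | zero => simp
  | succ n ih => exact succ_nsmul A n ▸ ih.add hA

lemma monotone_nsmul_of_zero_mem (h0 : 0 ∈ A) : Monotone fun n : ℕ => n • A :=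
  fun _ _ => nsmul_subset_nsmul_right h0

lemma closure_subset_iUnion_nsmul : (AddSubmonoid.closure A : Set M) ⊆ ⋃ n : ℕ, n • A := by
  intro x hx
  induction hx using AddSubmonoid.closure_induction with
  | mem a ha => exact mem_iUnion.mpr ⟨1, by simpa using ha⟩
  | zero => exact mem_iUnion.mpr ⟨0, by simp⟩
  | add x y _ _ hx hy =>
    obtain ⟨⟨m, hm⟩, n, hn⟩ := And.intro (mem_iUnion.mp hx) (mem_iUnion.mp hy)
    exact mem_iUnion.mpr ⟨m + n, add_nsmul A m n ▸ add_mem_add hm hn⟩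

lemma exists_subset_nsmul_of_finite (h0 : 0 ∈ A) {S : Set M} (hS : S.Finite)
    (hSA : S ⊆ AddSubmonoid.closure A) : ∃ C : ℕ, S ⊆ C • A := by
  lift S to Finset M using hS
  exact (monotone_nsmul_of_zero_mem h0).directed_le.exists_mem_subset_of_finset_subset_biUnion
    (hSA.trans closure_subset_iUnion_nsmul)

end AddMonoid

section AddCommMonoid

variable {M : Type*} [AddCommMonoid M] {A : Set M}

lemma sum_nsmul_mem_nsmul {s : Finset M} (hs : (s : Set M) ⊆ A) (c : M → ℕ) :
    ∑ a ∈ s, c a • a ∈ (∑ a ∈ s, c a) • A := by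
  rw [← Finset.sum_nsmul_assoc]
  exact finsetSum_mem_finsetSum s _ _ fun a ha => nsmul_mem_nsmul (hs ha)

/-- Pigeonhole: among `m + k` summands from `A`, one element of `A` occurs at least `m` times. -/
lemma add_nsmul_subset_image_nsmul_add (hA : A.Finite) (hne : A.Nonempty) {m k : ℕ}
    (hk : A.ncard * m ≤ m + k) : (m + k) • A ⊆ (m • ·) '' A + k • A := by
  classical
  lift A to Finset M using hA
  intro x hx
  obtain ⟨f, hf, rfl⟩ := mem_nsmul_iff_sum.mp hx
  obtain ⟨a, ha, hma⟩ := Finset.exists_le_card_fiber_of_mul_le_card_of_maps_to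
    (s := Finset.univ) (t := A) (f := f) (n := m) (fun i _ => hf i) hne (by simpa using hk)
  obtain ⟨T, hT, hTcard⟩ := Finset.exists_subset_card_eq hma
  have hsumT : ∑ i ∈ T, f i = m • a := by
    rw [Finset.sum_congr rfl fun i hi => (Finset.mem_filter.mp (hT hi)).2, Finset.sum_const,
      hTcard]
  have hsumTc : ∑ i ∈ Tᶜ, f i ∈ k • (A : Set M) := by
    have h := finsetSum_mem_finsetSum Tᶜ (fun _ => (A : Set M)) f fun i _ => hf i
    rwa [Finset.sum_const, Finset.card_compl, hTcard, Fintype.card_fin,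
      Nat.add_sub_cancel_left] at h
  rw [← Finset.sum_add_sum_compl T, hsumT]
  exact add_mem_add (mem_image_of_mem _ ha) hsumTc

lemma nsmul_add_subset_of_add_subset {V W N : Set M} (h : W + N ⊆ V + N) (j : ℕ) :
    j • W + N ⊆ j • V + N := by
  induction j with
  | zero => simp
  | succ j ih =>
    calc (j + 1) • W + N = j • W + (W + N) := by rw [succ_nsmul, add_assoc]
      _ ⊆ j • W + (V + N) := add_subset_add_left h
      _ = j • W + N + V := by rw [add_comm V, add_assoc]
      _ ⊆ j • V + N + V := add_subset_add_right ih
      _ = (j + 1) • V + N := by rw [succ_nsmul, add_right_comm]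

end AddCommMonoid

/-! ### Merging classes -/

/-- The `n`-th merging class of `x` under the dynamics of `f`: the points whose orbit has merged
with the orbit of `x` after `n` steps. Its cardinality is the conjugacy invariant on which the
whole argument rests. -/
def mergeClass {X : Type*} (f : X → X) (n : ℕ) (x : X) : Set X :=
  {y | f^[n] y = f^[n] x}

lemma image_mergeClass {X Y : Type*} {f : X → X} {g : Y → Y} (Φ : X ≃ Y)
    (hΦ : Function.Semiconj Φ f g) (n : ℕ) (x : X) :
    Φ '' mergeClass f n x = mergeClass g n (Φ x) := by
  ext y
  obtain ⟨y, rfl⟩ := Φ.surjective y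
  simp only [mergeClass, Φ.injective.mem_set_image, mem_ofPred_eq, ← (hΦ.iterate_right n).eq,
    Φ.injective.eq_iff]

lemma mem_mergeClass_add_right {M : Type*} [AddMonoid M] {a x y : M} {n : ℕ} :
    y ∈ mergeClass (· + a) n x ↔ y + n • a = x + n • a := by
  simp [mergeClass]

lemma apply_add_nsmul {M₁ M₂ : Type*} [AddMonoid M₁] [AddMonoid M₂] {a : M₁} {b : M₂}
    {Φ : M₁ → M₂} (hΦ : Function.Semiconj Φ (· + a) (· + b)) (n : ℕ) (x : M₁) :
    Φ (x + n • a) = Φ x + n • b := by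
  simpa using (hΦ.iterate_right n).eq x

lemma mergeClass_finite {M : Type*} [AddMonoid M] {A : Set M} (hA : A.Finite) (h0 : 0 ∈ A)
    {V : Set M} (hV : V.Finite) (n : ℕ) : (mergeClass (· + A) n V).Finite := by
  refine (hV.add (finite_nsmul hA n)).finite_subsets.subset fun W hW => ?_
  exact mem_mergeClass_add_right.mp hW ▸ subset_add_left W (zero_mem_nsmul h0)

lemma Icc_image_nsmul_subset_mergeClass {M : Type*} [AddCommMonoid M] {A : Set M}
    (hA : A.Finite) (hne : A.Nonempty) {m k : ℕ} (hk : A.ncard * m ≤ m + k) :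
    Icc ((m • ·) '' A) (m • A) ⊆ mergeClass (· + A) k (m • A) := by
  refine fun W hW => mem_mergeClass_add_right.mpr ((add_subset_add_right hW.2).antisymm ?_)
  rw [← add_nsmul]
  exact (add_nsmul_subset_image_nsmul_add hA hne hk).trans (add_subset_add_right hW.1)

lemma two_pow_le_ncard_mergeClass {M : Type*} [AddCommMonoid M] {A : Set M}
    (hA : A.Finite) (h0 : 0 ∈ A) {m k : ℕ} (hk : A.ncard * m ≤ m + k) :
    2 ^ ((m • A).ncard - A.ncard) ≤ (mergeClass (· + A) k (m • A)).ncard := by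
  have hsub : (m • ·) '' A ⊆ m • A := image_subset_iff.mpr fun a ha => nsmul_mem_nsmul ha
  calc 2 ^ ((m • A).ncard - A.ncard) ≤ 2 ^ ((m • A).ncard - ((m • ·) '' A).ncard) :=
        Nat.pow_le_pow_right two_pos (Nat.sub_le_sub_left (ncard_image_le hA) _)
    _ = (Icc ((m • ·) '' A) (m • A)).ncard := (ncard_Icc_of_subset (finite_nsmul hA m) hsub).symm
    _ ≤ _ := ncard_le_ncard (Icc_image_nsmul_subset_mergeClass hA ⟨0, h0⟩ hk)
        (mergeClass_finite hA h0 (finite_nsmul hA m) k)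

lemma nsmul_subset_insert_zero {M : Type*} [AddCommMonoid M] {A : Set M} (h0 : 0 ∈ A) (n : ℕ) :
    n • A ⊆ insert 0 (A \ {0} + n • A) := by
  induction n with
  | zero => simp
  | succ n ih =>
    have hmono : n • A ⊆ (n + 1) • A := monotone_nsmul_of_zero_mem h0 n.le_succ
    intro x hx
    rw [succ_nsmul] at hx
    obtain ⟨u, hu, a, ha, rfl⟩ := hx
    by_cases ha0 : a = 0
    · simpa [ha0] using insert_subset_insert (add_subset_add_left hmono) (ih hu)
    · exact Or.inr ⟨a, ⟨ha, ha0⟩, u, hmono hu, add_comm a u⟩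

section AddCommGroup

variable {G : Type*} [AddCommGroup G] {A : Set G}

lemma exists_nsmul_subset_sdiff_zero_add [Nontrivial G] (h0 : 0 ∈ A)
    (hgen : AddSubmonoid.closure A = ⊤) : ∃ n : ℕ, n • A ⊆ A \ {0} + n • A := by
  obtain ⟨b, hbA, hb0⟩ : ∃ b ∈ A, b ≠ 0 := by
    by_contra! h
    have hbot : AddSubmonoid.closure A ≤ ⊥ := AddSubmonoid.closure_le.mpr h
    exact bot_ne_top (top_le_iff.mp (hgen ▸ hbot))
  obtain ⟨n, hn⟩ := exists_subset_nsmul_of_finite h0 (finite_singleton (-b)) (by simp [hgen])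
  have hzero : (0 : G) ∈ A \ {0} + n • A := ⟨b, ⟨hbA, hb0⟩, -b, hn rfl, add_neg_cancel b⟩
  exact ⟨n, (nsmul_subset_insert_zero h0 n).trans (insert_subset hzero subset_rfl)⟩

/-- Removing a single point of `Q` from `Q + A` does not affect a suitable later image. -/
lemma exists_mergeClass_infinite (h0 : 0 ∈ A) (hgen : AddSubmonoid.closure A = ⊤) {Q : Set G}
    (hQ : Q.Infinite) : ∃ n : ℕ, (mergeClass (· + A) n (Q + A)).Infinite := by
  have : Nontrivial G := nontrivial_of_nontrivial hQ.nontrivial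
  obtain ⟨n, hn⟩ := exists_nsmul_subset_sdiff_zero_add h0 hgen
  have hQA : Q ⊆ Q + A := subset_add_left Q h0
  refine ⟨n, infinite_of_injOn_mapsTo (f := fun q => (Q + A) \ {q}) ?_ ?_ hQ⟩
  · intro p hp q _ hpq
    have hpq : (Q + A) \ {p} = (Q + A) \ {q} := hpq
    by_contra hne
    exact (hpq ▸ (⟨hQA hp, hne⟩ : p ∈ (Q + A) \ {q}) : p ∈ (Q + A) \ {p}).2 rfl
  · refine fun q hq => mem_mergeClass_add_right.mpr
      ((add_subset_add_right sdiff_subset).antisymm ?_)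
    rintro _ ⟨v, hv, x, hx, rfl⟩
    rcases eq_or_ne v q with rfl | hvq
    · obtain ⟨a, ⟨ha, ha0⟩, y, hy, rfl⟩ := hn hx
      exact ⟨v + a, ⟨add_mem_add hq ha, by simpa using ha0⟩, y, hy, add_assoc v a y⟩
    · exact add_mem_add ⟨hv, hvq⟩ hx

lemma finite_apply_of_semiconj {M : Type*} [AddMonoid M] {B : Set M} (hB : B.Finite) (h0B : 0 ∈ B)
    (h0 : 0 ∈ A) (hgen : AddSubmonoid.closure A = ⊤) {Φ : Set M ≃ Set G}
    (hΦ : Function.Semiconj Φ (· + B) (· + A)) {F : Set M} (hF : F.Finite) : (Φ F).Finite := by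
  by_contra hQ
  obtain ⟨n, hn⟩ := exists_mergeClass_infinite h0 hgen hQ
  refine hn ?_
  rw [← hΦ.eq F, ← image_mergeClass Φ hΦ]
  exact (mergeClass_finite hB h0B (hF.add hB) n).image Φ

end AddCommGroup

/-! ### Dilated convex hulls and their lattice points -/

lemma nsmul_eq_natCast_smul_of_convex {𝕜 E : Type*} [Field 𝕜] [LinearOrder 𝕜]
    [IsStrictOrderedRing 𝕜] [AddCommGroup E] [Module 𝕜 E] {K : Set E} (hK : Convex 𝕜 K)
    (hne : K.Nonempty) (n : ℕ) : n • K = (n : 𝕜) • K := by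
  induction n with
  | zero => simp [zero_smul_set hne]
  | succ n ih =>
    rw [succ_nsmul, ih, Nat.cast_succ, hK.add_smul n.cast_nonneg zero_le_one, one_smul]

lemma exists_weights_of_mem_smul_convexHull {𝕜 ι E : Type*} [Field 𝕜] [LinearOrder 𝕜]
    [IsStrictOrderedRing 𝕜] [AddCommGroup E] [Module 𝕜 E] {s : Finset ι} {v : ι → E}
    (hv : InjOn v s) {r : 𝕜} (hr : 0 ≤ r) {x : E} (hx : x ∈ r • convexHull 𝕜 (v '' s)) :
    ∃ w : ι → 𝕜, (∀ i ∈ s, 0 ≤ w i) ∧ ∑ i ∈ s, w i = r ∧ ∑ i ∈ s, w i • v i = x := by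
  classical
  obtain ⟨y, hy, rfl⟩ := hx
  rw [← Finset.coe_image, Finset.mem_convexHull'] at hy
  obtain ⟨w, hw0, hw1, rfl⟩ := hy
  rw [Finset.sum_image hv] at hw1
  refine ⟨fun i => r * w (v i), fun i hi => mul_nonneg hr (hw0 _ (Finset.mem_image_of_mem v hi)),
    by rw [← Finset.mul_sum, hw1, mul_one], ?_⟩
  simp only [Finset.sum_image hv, Finset.smul_sum, mul_smul]

section Lattice

variable {d : ℕ} {A : Set (Fin d → ℤ)}

lemma PosGenZ.closure_eq_top (hA : PosGenZ A) : AddSubmonoid.closure A = ⊤ := by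
  refine (AddSubmonoid.eq_top_iff' _).mpr fun g => ?_
  obtain ⟨n, -, hn⟩ := hA g
  obtain ⟨f, hf, rfl⟩ := mem_nsmul_iff_sum.mp hn
  exact sum_mem fun i _ => AddSubmonoid.subset_closure (hf i)

/-- The embedding `coeR : ℤ^d → ℝ^d` bundled as a homomorphism of additive groups,
so that the lemmas on images under homomorphisms apply to it. -/
def coeRHom (d : ℕ) : (Fin d → ℤ) →+ (Fin d → ℝ) :=
  (Int.castAddHom ℝ).compLeft (Fin d)

lemma coe_coeRHom : ⇑(coeRHom d) = coeR := rfl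

lemma coeR_injective : Function.Injective (coeR (d := d)) :=
  Int.cast_injective.comp_left

/-- The lattice points of the dilate `m K` of `K ⊆ ℝ^d`. For `K = conv A` they agree with the
sumset `m • A` up to a bounded shift in `m`, and their number is governed by the volume of `K`. -/
def dilateLatticePoints (K : Set (Fin d → ℝ)) (m : ℕ) : Set (Fin d → ℤ) :=
  coeR ⁻¹' ((m : ℝ) • K)

lemma nsmul_mem_dilateLatticePoints_mul_iff {K : Set (Fin d → ℝ)} {j m : ℕ} (hj : j ≠ 0)
    {x : Fin d → ℤ} :
    j • x ∈ dilateLatticePoints K (j * m) ↔ x ∈ dilateLatticePoints K m := by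
  have hcoe : coeR (j • x) = (j : ℝ) • coeR x := by
    rw [Nat.cast_smul_eq_nsmul, ← coe_coeRHom, map_nsmul]
  rw [dilateLatticePoints, mem_preimage, hcoe, Nat.cast_mul, mul_smul,
    smul_mem_smul_set_iff₀ (Nat.cast_ne_zero.mpr hj), dilateLatticePoints, mem_preimage]

lemma nsmul_subset_dilateLatticePoints (hne : A.Nonempty) (m : ℕ) :
    m • A ⊆ dilateLatticePoints (convexHull ℝ (coeR '' A)) m := by
  rw [dilateLatticePoints, ← image_subset_iff, ← nsmul_eq_natCast_smul_of_convex
    (convex_convexHull ℝ _) (hne.image coeR).convexHull, ← coe_coeRHom, image_nsmul]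
  exact nsmul_subset_nsmul_left (subset_convexHull ℝ _)

lemma abs_sub_sum_floor_smul_le {ι : Type*} {s : Finset ι} {v : ι → Fin d → ℤ} {w : ι → ℝ}
    (hw : ∀ i ∈ s, 0 ≤ w i) {x : Fin d → ℤ} (hx : ∑ i ∈ s, w i • coeR (v i) = coeR x) :
    |x - ∑ i ∈ s, ⌊w i⌋₊ • v i| ≤ ∑ i ∈ s, |v i| := by
  intro j
  have hxj : (x j : ℝ) = ∑ i ∈ s, w i * v i j := by
    simpa [coeR] using (congrFun hx j).symm
  have hfloor : ∀ i ∈ s, |w i - ⌊w i⌋₊| ≤ 1 := fun i hi =>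
    abs_le.mpr ⟨by linarith [Nat.floor_le (hw i hi)], by linarith [Nat.lt_floor_add_one (w i)]⟩
  simp only [Pi.abs_apply, Pi.sub_apply, Finset.sum_apply, Pi.smul_apply, smul_eq_mul,
    ← natCast_zsmul]
  rify
  calc |(x j : ℝ) - ∑ i ∈ s, (⌊w i⌋₊ : ℝ) * v i j| = |∑ i ∈ s, (w i - ⌊w i⌋₊) * v i j| := by
        simp only [hxj, sub_mul, Finset.sum_sub_distrib]
    _ ≤ ∑ i ∈ s, |w i - ⌊w i⌋₊| * |(v i j : ℝ)| :=
        (Finset.abs_sum_le_sum_abs _ s).trans_eq (by simp only [abs_mul])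
    _ ≤ ∑ i ∈ s, |(v i j : ℝ)| := Finset.sum_le_sum fun i hi =>
        mul_le_of_le_one_left (abs_nonneg _) (hfloor i hi)

/-- Rounding down the weights of a convex combination leaves a remainder in a bounded set that does
not depend on `m`. -/
lemma exists_dilateLatticePoints_subset_nsmul (hA : A.Finite) (h0 : 0 ∈ A)
    (hgen : AddSubmonoid.closure A = ⊤) :
    ∃ C : ℕ, ∀ m, dilateLatticePoints (convexHull ℝ (coeR '' A)) m ⊆ (m + C) • A := by
  lift A to Finset (Fin d → ℤ) using hA
  obtain ⟨C, hC⟩ := exists_subset_nsmul_of_finite h0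
    (finite_Icc (-∑ a ∈ A, |a|) (∑ a ∈ A, |a|)) (by simp [hgen])
  refine ⟨C, fun m x hx => ?_⟩
  obtain ⟨w, hw0, hwm, hwx⟩ :=
    exists_weights_of_mem_smul_convexHull coeR_injective.injOn m.cast_nonneg hx
  have hfloor : ∑ a ∈ A, ⌊w a⌋₊ ≤ m := by
    have : ∑ a ∈ A, (⌊w a⌋₊ : ℝ) ≤ m :=
      hwm ▸ Finset.sum_le_sum fun a ha => Nat.floor_le (hw0 a ha)
    exact_mod_cast this
  have hmain : ∑ a ∈ A, ⌊w a⌋₊ • a ∈ m • (A : Set (Fin d → ℤ)) :=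
    monotone_nsmul_of_zero_mem h0 hfloor (sum_nsmul_mem_nsmul subset_rfl _)
  obtain ⟨hle, hneg⟩ := abs_le'.mp (abs_sub_sum_floor_smul_le hw0 hwx)
  have hrem : x - ∑ a ∈ A, ⌊w a⌋₊ • a ∈ C • (A : Set (Fin d → ℤ)) :=
    hC ⟨neg_le.mp hneg, hle⟩
  rw [add_nsmul]
  exact ⟨_, hmain, _, hrem, add_sub_cancel _ _⟩

/-- Cancellation: iterating the inclusion shows that `(n + 1) • w` lies in
`((n + 1) * (r + 1)) • A` for `w ∈ W`, so that `w` is a lattice point of the dilate of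
`conv A` by `r + 1`. -/
lemma exists_subset_nsmul_of_add_nsmul_subset (hA : A.Finite) (h0 : 0 ∈ A)
    (hgen : AddSubmonoid.closure A = ⊤) :
    ∃ C : ℕ, ∀ (r n : ℕ) (W : Set (Fin d → ℤ)), W + n • A ⊆ (r + n) • A → W ⊆ (r + C) • A := by
  obtain ⟨C, hC⟩ := exists_dilateLatticePoints_subset_nsmul hA h0 hgen
  refine ⟨1 + C, fun r n W hW w hw => ?_⟩
  rw [add_nsmul] at hW
  have hiter : (n + 1) • w ∈ ((n + 1) * r + n) • A := by
    rw [add_nsmul, mul_nsmul']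
    exact nsmul_add_subset_of_add_subset hW (n + 1)
      (subset_add_left _ (zero_mem_nsmul h0) (nsmul_mem_nsmul hw))
  have hmul : (n + 1) • w ∈ ((n + 1) * (r + 1)) • A :=
    monotone_nsmul_of_zero_mem h0 (by lia) hiter
  rw [← add_assoc]
  exact hC (r + 1) ((nsmul_mem_dilateLatticePoints_mul_iff n.succ_ne_zero).mp
    (nsmul_subset_dilateLatticePoints ⟨0, h0⟩ _ hmul))

lemma exists_mergeClass_subset_powerset (hA : A.Finite) (h0 : 0 ∈ A)
    (hgen : AddSubmonoid.closure A = ⊤) {F : Set (Fin d → ℤ)} (hF : F.Finite) :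
    ∃ C : ℕ, ∀ m n, mergeClass (· + A) n (F + m • A) ⊆ 𝒫 ((m + C) • A) := by
  obtain ⟨c, hc⟩ := exists_subset_nsmul_of_finite h0 hF (by simp [hgen])
  obtain ⟨C, hC⟩ := exists_subset_nsmul_of_add_nsmul_subset hA h0 hgen
  refine ⟨c + C, fun m n W hW => ?_⟩
  rw [← add_assoc]
  refine hC (m + c) n W ?_
  rw [mem_mergeClass_add_right.mp hW, add_comm m c, add_nsmul, add_nsmul]
  exact add_subset_add_right (add_subset_add_right hc)

lemma exists_ncard_nsmul_le {M : Type*} [AddCommMonoid M] {B : Set M} (hB : B.Finite)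
    (h0B : 0 ∈ B) (hA : A.Finite) (h0 : 0 ∈ A) (hgen : AddSubmonoid.closure A = ⊤)
    {Φ : Set M ≃ Set (Fin d → ℤ)} (hΦ : Function.Semiconj Φ (· + B) (· + A)) :
    ∃ C : ℕ, ∀ m : ℕ, (m • B).ncard ≤ ((m + C) • A).ncard + B.ncard := by
  obtain ⟨C, hC⟩ := exists_mergeClass_subset_powerset hA h0 hgen
    (finite_apply_of_semiconj hB h0B h0 hgen hΦ (finite_singleton 0))
  refine ⟨C, fun m => ?_⟩
  set k := B.ncard * m
  have hfin : ((m + C) • A).Finite := finite_nsmul hA _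
  have himage : Φ '' mergeClass (· + B) k (m • B) = mergeClass (· + A) k (Φ {0} + m • A) := by
    rw [image_mergeClass Φ hΦ, ← apply_add_nsmul hΦ, singleton_zero, zero_add]
  have hpow : 2 ^ ((m • B).ncard - B.ncard) ≤ 2 ^ ((m + C) • A).ncard :=
    calc 2 ^ ((m • B).ncard - B.ncard) ≤ (mergeClass (· + B) k (m • B)).ncard :=
          two_pow_le_ncard_mergeClass hB h0B (Nat.le_add_left _ _)
      _ = (mergeClass (· + A) k (Φ {0} + m • A)).ncard := by
          rw [← himage, ncard_image_of_injective _ Φ.injective]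
      _ ≤ (𝒫 ((m + C) • A)).ncard := ncard_le_ncard (hC m k) hfin.powerset
      _ = 2 ^ ((m + C) • A).ncard := ncard_powerset _ hfin
  exact Nat.sub_le_iff_le_add.mp ((Nat.pow_le_pow_iff_right one_lt_two).mp hpow)

/-! ### Asymptotics -/

lemma coe_span_int_range_basisFun :
    (Submodule.span ℤ (range (Pi.basisFun ℝ (Fin d))) : Set (Fin d → ℝ)) = range coeR := by
  ext x
  simp only [SetLike.mem_coe, Module.Basis.mem_span_iff_repr_mem, Pi.basisFun_repr, mem_range,
    coeR, funext_iff, eq_intCast]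
  exact Classical.skolem

lemma tendsto_ncard_dilateLatticePoints_div_pow {K : Set (Fin d → ℝ)} (hK : Bornology.IsBounded K)
    (hmeas : MeasurableSet K) (hfrontier : volume (frontier K) = 0) :
    Tendsto (fun m : ℕ => ((dilateLatticePoints K m).ncard : ℝ) / (m : ℝ) ^ d) atTop
      (nhds (volume.real K)) := by
  have hlim := tendsto_card_div_pow_atTop_volume K hK hmeas hfrontier
  rw [Fintype.card_fin, coe_span_int_range_basisFun] at hlim
  refine hlim.congr' ?_
  filter_upwards [eventually_ne_atTop 0] with m hm
  have hm : (m : ℝ) ≠ 0 := Nat.cast_ne_zero.mpr hm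
  have hscale : K ∩ (m : ℝ)⁻¹ • range coeR = (m : ℝ)⁻¹ • (coeR '' dilateLatticePoints K m) := by
    rw [dilateLatticePoints, image_preimage_eq_inter_range, smul_set_inter₀ (inv_ne_zero hm),
      inv_smul_smul₀ hm]
  rw [hscale, Nat.card_coe_set_eq, ← image_smul,
    ncard_image_of_injective _ (smul_right_injective _ (inv_ne_zero hm)),
    ncard_image_of_injective _ coeR_injective]

lemma isCompact_convexHull_coeR (hA : A.Finite) : IsCompact (convexHull ℝ (coeR '' A)) :=
  (hA.image coeR).isCompact_convexHull ℝ

lemma interior_convexHull_coeR_nonempty (h0 : 0 ∈ A) (hgen : AddSubmonoid.closure A = ⊤) :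
    (interior (convexHull ℝ (coeR '' A))).Nonempty := by
  have hspan : Submodule.span ℝ (coeR '' A) = ⊤ := by
    refine top_le_iff.mp ((Pi.basisFun ℝ (Fin d)).span_eq ▸ Submodule.span_le.mpr ?_)
    rintro _ ⟨i, rfl⟩
    refine Submodule.closure_subset_span ?_
    rw [← coe_coeRHom, ← AddMonoidHom.map_mclosure, hgen]
    exact ⟨Pi.single i 1, trivial, by ext j; simp [coeRHom, Pi.single_apply]⟩
  have hzero : (0 : Fin d → ℝ) ∈ coeR '' A := ⟨0, h0, map_zero (coeRHom d)⟩
  rw [interior_convexHull_nonempty_iff_affineSpan_eq_top, ← insert_eq_of_mem hzero]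
  refine SetLike.coe_injective ?_
  rw [affineSpan_insert_zero, hspan, Submodule.top_coe, AffineSubspace.top_coe]

lemma volume_real_convexHull_coeR_pos (hA : A.Finite) (h0 : 0 ∈ A)
    (hgen : AddSubmonoid.closure A = ⊤) : 0 < volume.real (convexHull ℝ (coeR '' A)) :=
  ENNReal.toReal_pos
    (Measure.measure_pos_of_nonempty_interior _ (interior_convexHull_coeR_nonempty h0 hgen)).ne'
    (isCompact_convexHull_coeR hA).measure_ne_top

end Lattice

lemma tendsto_natCast_add_pow_div_pow (C d : ℕ) :
    Tendsto (fun m : ℕ => ((m + C : ℕ) : ℝ) ^ d / (m : ℝ) ^ d) atTop (nhds 1) := by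
  have h := ((tendsto_natCast_div_add_atTop (C : ℝ)).inv₀ one_ne_zero).pow d
  simpa [div_pow] using h

lemma tendsto_comp_add_div_pow_iff {f : ℕ → ℝ} {d : ℕ} {v : ℝ} (C : ℕ) :
    Tendsto (fun m : ℕ => f (m + C) / (m : ℝ) ^ d) atTop (nhds v) ↔
      Tendsto (fun m : ℕ => f m / (m : ℝ) ^ d) atTop (nhds v) := by
  have hratio := tendsto_natCast_add_pow_div_pow C d
  rw [← tendsto_add_atTop_iff_nat (f := fun m : ℕ => f m / (m : ℝ) ^ d) C]
  constructor <;> intro h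
  · have h := h.div hratio one_ne_zero
    rw [div_one] at h
    refine h.congr' ?_
    filter_upwards [eventually_ne_atTop 0] with m hm
    exact div_div_div_cancel_right₀ (by positivity) _ _
  · have h := h.mul hratio
    rw [mul_one] at h
    refine h.congr' ?_
    filter_upwards [eventually_ne_atTop 0] with m hm
    exact div_mul_div_cancel₀ (by positivity)

lemma tendsto_div_pow_zero_of_lt {f : ℕ → ℝ} {d e : ℕ} {v : ℝ}
    (hf : Tendsto (fun m : ℕ => f m / (m : ℝ) ^ d) atTop (nhds v)) (hde : d < e) :
    Tendsto (fun m : ℕ => f m / (m : ℝ) ^ e) atTop (nhds 0) := by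
  have h := hf.mul (tendsto_inv_atTop_zero.comp
    ((tendsto_pow_atTop (Nat.sub_ne_zero_of_lt hde)).comp tendsto_natCast_atTop_atTop))
  rw [mul_zero] at h
  refine h.congr fun m => ?_
  rw [← Nat.add_sub_of_le hde.le]
  simp [pow_add, div_eq_mul_inv, mul_assoc, mul_comm]

lemma le_of_tendsto_div_pow_of_le_shift {f g : ℕ → ℝ} {d C : ℕ} {v w B : ℝ} (hd : d ≠ 0)
    (hf : Tendsto (fun m : ℕ => f m / (m : ℝ) ^ d) atTop (nhds v))
    (hg : Tendsto (fun m : ℕ => g m / (m : ℝ) ^ d) atTop (nhds w))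
    (hfg : ∀ m, f m ≤ g (m + C) + B) : v ≤ w := by
  have hB : Tendsto (fun m : ℕ => B / (m : ℝ) ^ d) atTop (nhds 0) :=
    tendsto_div_pow_zero_of_lt (d := 0) (v := B) (by simp) hd.pos
  have hgB := ((tendsto_comp_add_div_pow_iff C).mpr hg).add hB
  rw [add_zero] at hgB
  refine le_of_tendsto_of_tendsto' hf hgB fun m => ?_
  rw [← add_div]
  gcongr
  exact hfg m

lemma le_exponent_of_le_shift {f g : ℕ → ℝ} {d e C : ℕ} {v w B : ℝ} (hv : 0 < v)
    (hf : Tendsto (fun m : ℕ => f m / (m : ℝ) ^ d) atTop (nhds v))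
    (hg : Tendsto (fun m : ℕ => g m / (m : ℝ) ^ e) atTop (nhds w))
    (hfg : ∀ m, f m ≤ g (m + C) + B) : d ≤ e := by
  by_contra! hlt
  exact hv.not_ge (le_of_tendsto_div_pow_of_le_shift hlt.ne_bot hf
    (tendsto_div_pow_zero_of_lt hg hlt) hfg)

lemma tendsto_div_pow_of_le_of_le_shift {f g : ℕ → ℝ} {d C : ℕ} {v : ℝ}
    (hg : Tendsto (fun m : ℕ => g m / (m : ℝ) ^ d) atTop (nhds v)) (hfg : ∀ m, f m ≤ g m)
    (hgf : ∀ m, g m ≤ f (m + C)) :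
    Tendsto (fun m : ℕ => f m / (m : ℝ) ^ d) atTop (nhds v) := by
  refine (tendsto_comp_add_div_pow_iff C).mp
    (tendsto_of_tendsto_of_tendsto_of_le_of_le hg ((tendsto_comp_add_div_pow_iff C).mpr hg)
      (fun m => ?_) fun m => ?_)
  · exact div_le_div_of_nonneg_right (hgf m) (by positivity)
  · exact div_le_div_of_nonneg_right (hfg (m + C)) (by positivity)

lemma tendsto_ncard_nsmul_div_pow {d : ℕ} {A : Set (Fin d → ℤ)} (hA : A.Finite) (h0 : 0 ∈ A)
    (hgen : AddSubmonoid.closure A = ⊤) :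
    Tendsto (fun m : ℕ => ((m • A).ncard : ℝ) / (m : ℝ) ^ d) atTop
      (nhds (volume.real (convexHull ℝ (coeR '' A)))) := by
  have hcpt := isCompact_convexHull_coeR hA
  obtain ⟨C, hC⟩ := exists_dilateLatticePoints_subset_nsmul hA h0 hgen
  have hfin := fun m => finite_nsmul hA m
  refine tendsto_div_pow_of_le_of_le_shift (C := C)
    (tendsto_ncard_dilateLatticePoints_div_pow hcpt.isBounded hcpt.measurableSet
      ((convex_convexHull ℝ _).addHaar_frontier volume)) (fun m => ?_) (fun m => ?_)
  · exact_mod_cast ncard_le_ncard (nsmul_subset_dilateLatticePoints ⟨0, h0⟩ m)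
      ((hfin _).subset (hC m))
  · exact_mod_cast ncard_le_ncard (hC m) (hfin _)

lemma dim_le_of_semiconj {d₁ d₂ : ℕ} {A₁ : Set (Fin d₁ → ℤ)} (hA₁ : A₁.Finite) (h0₁ : 0 ∈ A₁)
    (hgen₁ : AddSubmonoid.closure A₁ = ⊤) {A₂ : Set (Fin d₂ → ℤ)} (hA₂ : A₂.Finite) (h0₂ : 0 ∈ A₂)
    (hgen₂ : AddSubmonoid.closure A₂ = ⊤) {Φ : Set (Fin d₁ → ℤ) ≃ Set (Fin d₂ → ℤ)}
    (hΦ : Function.Semiconj Φ (· + A₁) (· + A₂)) : d₁ ≤ d₂ := by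
  obtain ⟨C, hC⟩ := exists_ncard_nsmul_le hA₁ h0₁ hA₂ h0₂ hgen₂ hΦ
  exact le_exponent_of_le_shift (C := C) (B := A₁.ncard)
    (volume_real_convexHull_coeR_pos hA₁ h0₁ hgen₁)
    (tendsto_ncard_nsmul_div_pow hA₁ h0₁ hgen₁) (tendsto_ncard_nsmul_div_pow hA₂ h0₂ hgen₂)
    fun m => mod_cast hC m

lemma volume_convexHull_le_of_semiconj {d : ℕ} {A₁ : Set (Fin d → ℤ)} (hA₁ : A₁.Finite)
    (h0₁ : 0 ∈ A₁) (hgen₁ : AddSubmonoid.closure A₁ = ⊤) {A₂ : Set (Fin d → ℤ)} (hA₂ : A₂.Finite)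
    (h0₂ : 0 ∈ A₂) (hgen₂ : AddSubmonoid.closure A₂ = ⊤) {Φ : Set (Fin d → ℤ) ≃ Set (Fin d → ℤ)}
    (hΦ : Function.Semiconj Φ (· + A₁) (· + A₂)) :
    volume (convexHull ℝ (coeR '' A₁)) ≤ volume (convexHull ℝ (coeR '' A₂)) := by
  obtain ⟨C, hC⟩ := exists_ncard_nsmul_le hA₁ h0₁ hA₂ h0₂ hgen₂ hΦ
  rcases eq_or_ne d 0 with rfl | hd
  · -- In dimension zero the bounded error is not negligible, but there both sets equal `{0}`.
    rw [Subsingleton.eq_univ_of_nonempty ⟨0, h0₁⟩, Subsingleton.eq_univ_of_nonempty ⟨0, h0₂⟩]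
  · exact (ENNReal.toReal_le_toReal (isCompact_convexHull_coeR hA₁).measure_ne_top
      (isCompact_convexHull_coeR hA₂).measure_ne_top).mp
      (le_of_tendsto_div_pow_of_le_shift (C := C) (B := A₁.ncard) hd
        (tendsto_ncard_nsmul_div_pow hA₁ h0₁ hgen₁) (tendsto_ncard_nsmul_div_pow hA₂ h0₂ hgen₂)
        fun m => mod_cast hC m)

theorem dim_and_volume_of_topConj_general {d₁ d₂ : ℕ}
    {A₁ : Set (Fin d₁ → ℤ)} (hfin₁ : A₁.Finite) (h0₁ : (0 : Fin d₁ → ℤ) ∈ A₁)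
    (hgen₁ : PosGenZ A₁)
    {A₂ : Set (Fin d₂ → ℤ)} (hfin₂ : A₂.Finite) (h0₂ : (0 : Fin d₂ → ℤ) ∈ A₂)
    (hgen₂ : PosGenZ A₂) (Φ : Set (Fin d₁ → ℤ) ≃ Set (Fin d₂ → ℤ))
    (hΦ : Function.Semiconj Φ (· + A₁) (· + A₂)) :
    d₁ = d₂ ∧
      volume (convexHull ℝ (coeR '' A₁)) = volume (convexHull ℝ (coeR '' A₂)) := by
  replace hgen₁ := hgen₁.closure_eq_top
  replace hgen₂ := hgen₂.closure_eq_top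
  have hΦ' : Function.Semiconj Φ.symm (· + A₂) (· + A₁) :=
    hΦ.inverse_left Φ.symm_apply_apply Φ.apply_symm_apply
  obtain rfl := (dim_le_of_semiconj hfin₁ h0₁ hgen₁ hfin₂ h0₂ hgen₂ hΦ).antisymm
    (dim_le_of_semiconj hfin₂ h0₂ hgen₂ hfin₁ h0₁ hgen₁ hΦ')
  exact ⟨rfl, (volume_convexHull_le_of_semiconj hfin₁ h0₁ hgen₁ hfin₂ h0₂ hgen₂ hΦ).antisymm
    (volume_convexHull_le_of_semiconj hfin₂ h0₂ hgen₂ hfin₁ h0₁ hgen₁ hΦ')⟩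

/-- If the Minkowski sum maps `φ_{A₁} : 𝒫(ℤ^{d₁}) → 𝒫(ℤ^{d₁})` and
`φ_{A₂} : 𝒫(ℤ^{d₂}) → 𝒫(ℤ^{d₂})` are topologically conjugate, then `d₁ = d₂`
and the convex hulls of `A₁` and `A₂` have the same Lebesgue volume. -/
theorem dim_and_volume_of_topConj {d₁ d₂ : ℕ}
    (A₁ : Set (Fin d₁ → ℤ)) (hfin₁ : A₁.Finite) (h0₁ : (0 : Fin d₁ → ℤ) ∈ A₁)
    (hgen₁ : PosGenZ A₁)
    (A₂ : Set (Fin d₂ → ℤ)) (hfin₂ : A₂.Finite) (h0₂ : (0 : Fin d₂ → ℤ) ∈ A₂)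
    (hgen₂ : PosGenZ A₂)
    (hconj : TopConj (cylTop (Fin d₁ → ℤ)) (cylTop (Fin d₂ → ℤ))
      (fun W => W + A₁) (fun W => W + A₂)) :
    d₁ = d₂ ∧
      volume (convexHull ℝ (coeR '' A₁)) = volume (convexHull ℝ (coeR '' A₂)) := by
  obtain ⟨Φ, -, -, hΦ⟩ := hconj
  exact dim_and_volume_of_topConj_general hfin₁ h0₁ hgen₁ hfin₂ h0₂ hgen₂ Φ hΦ
end

section
/- Let (Γ,A) be a finitely generated group and let q ∈ ℕ satisfy A^{-1} ⊆ A^q. Then Γ is amenable if and only if there exists a sequence (M_n)_{n∈ℕ} of nonempty finite subsets of Γ such that lim_{n→∞} L_A^q(φ_A^{(q+5)q}(M_n)) / L_A^q(φ_A^{(q+1)q}(M_n)) = 1. -/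
/-!
Fix a finite `B ∋ 1`, `B ≠ {1}`, put `κ = |B B⁻¹|`, and let `L W` be the logarithm of the number
of sets `N` with `N B = W B`. Every such `N` lies in `W B`, so `L W ≤ |W B|`.

*Lower bound.* If `W'` is sufficiently larger than `W`, adding the shell `W' \ W B` to a solution
`N` for `W` gives a solution for `W'`. Points `e` of the shell with disjoint translates `e B` may
then be deleted independently, as long as each is covered by another point `e b⁻¹` of the shell.
A maximal set of such points inside `X` has at least `|X| / κ` elements, so
`|X| ≤ κ (L W' - L W)`.

*Upper bound.* If `M B B⁻¹ ⊆ W ⊆ W'`, then `N ↦ (N ∩ M) ∪ (W \ M)` turns solutions for `W'` into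
solutions for `W` and forgets only the trace of `N` on `W' B \ M`, so
`L W' ≤ L W + |W' B \ M|`.

If `F` is Følner, take `M = F`, `W = F B B⁻¹ A ^ s` and `W' = F B B⁻¹ A ^ t`: the upper bound makes
`L W' - L W` negligible compared with `|F|`, while the lower bound over the empty set gives
`|F| ≤ κ L W`. Conversely, if `L W' / L W → 1` for `W = M A ^ s`, `W' = M A ^ t`, then the lower
bound for `X = W B A² \ W B A` shows that `|X|` is negligible compared with `L W ≤ |W B A|`, so the
sets `W B A` are asymptotically invariant under `A`.
-/

open Filter Set
open scoped Pointwise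

/-- A right Følner sequence: nonempty finite sets `F n` with
`|F n · g \ F n| / |F n| → 0` for every `g`. -/
def IsRightFolnerSeq {Γ : Type*} [Group Γ] (F : ℕ → Set Γ) : Prop :=
  (∀ n, (F n).Finite ∧ (F n).Nonempty) ∧
    ∀ g : Γ, Tendsto
      (fun n => ((((· * g) '' F n) \ F n).ncard : ℝ) / ((F n).ncard : ℝ))
      atTop (nhds 0)

/-- A group is amenable if it admits a right Følner sequence. -/
def AmenableGroup (Γ : Type*) [Group Γ] : Prop :=
  ∃ F : ℕ → Set Γ, IsRightFolnerSeq F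

/-! ### Binary logarithms of cardinalities -/

section LogCard

variable {α β : Type*}

lemma logb_two_natCast_nonneg (n : ℕ) : 0 ≤ Real.logb 2 n :=
  div_nonneg (Real.log_natCast_nonneg n) (Real.log_nonneg one_le_two)

lemma logb_two_ncard_le_of_injOn {S : Set α} {T : Set β} {f : α → β} (hT : T.Finite)
    (hf : MapsTo f S T) (hinj : InjOn f S) :
    Real.logb 2 S.ncard ≤ Real.logb 2 T.ncard := by
  rcases S.eq_empty_or_nonempty with rfl | hS
  · simpa using logb_two_natCast_nonneg T.ncard
  · have hpos : 0 < S.ncard := hS.ncard_pos (hT.of_injOn hf hinj)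
    refine Real.logb_le_logb_of_le one_lt_two (by exact_mod_cast hpos) ?_
    exact_mod_cast ncard_le_ncard_of_injOn f hf hinj hT

lemma logb_two_ncard_powerset {Y : Set β} (hY : Y.Finite) :
    Real.logb 2 (𝒫 Y).ncard = Y.ncard := by
  rw [ncard_powerset Y hY, Nat.cast_pow, Nat.cast_ofNat, Real.logb_pow,
    Real.logb_self_eq_one one_lt_two, mul_one]

lemma logb_two_ncard_prod_powerset {T : Set α} {Y : Set β} (hT : T.Finite) (hT' : T.Nonempty)
    (hY : Y.Finite) :
    Real.logb 2 (T ×ˢ 𝒫 Y).ncard = Real.logb 2 T.ncard + Y.ncard := by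
  have hTcard : (T.ncard : ℝ) ≠ 0 := by exact_mod_cast (hT'.ncard_pos hT).ne'
  have hYcard : ((𝒫 Y).ncard : ℝ) ≠ 0 := by
    exact_mod_cast (powerset_nonempty.ncard_pos hY.powerset).ne'
  rw [ncard_prod, Nat.cast_mul, Real.logb_mul hTcard hYcard, logb_two_ncard_powerset hY]

end LogCard

/-! ### Fibres of right multiplication by a set -/

/-- The fibre over `W * B` of the Minkowski product `N ↦ N * B`; `LA` counts its elements. -/
def mulFiber {G : Type*} [Mul G] (B W : Set G) : Set (Set G) := {N | N * B = W * B}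

/-- The number of bits needed to single out an element of `mulFiber B W`. It is meaningful when the
fibre is finite (it is the junk value `0` otherwise). -/
noncomputable def fiberEntropy {G : Type*} [Mul G] (B W : Set G) : ℝ :=
  Real.logb 2 (mulFiber B W).ncard

lemma fiberEntropy_nonneg {G : Type*} [Mul G] (B W : Set G) : 0 ≤ fiberEntropy B W :=
  logb_two_natCast_nonneg _

section MulOneClass

variable {G : Type*} [MulOneClass G] {B W N : Set G}

lemma self_mem_mulFiber (B W : Set G) : W ∈ mulFiber B W := rfl

lemma subset_mul_of_mem_mulFiber (h1 : 1 ∈ B) (hN : N ∈ mulFiber B W) : N ⊆ W * B :=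
  (subset_mul_left N h1).trans (Eq.subset hN)

lemma finite_mulFiber (h1 : 1 ∈ B) (hB : B.Finite) (hW : W.Finite) : (mulFiber B W).Finite :=
  (hW.mul hB).finite_subsets.subset fun _ => subset_mul_of_mem_mulFiber h1

lemma mulFiber_empty (h1 : 1 ∈ B) : mulFiber B ∅ = {∅} := by
  refine subset_antisymm (fun N hN => ?_) (singleton_subset_iff.2 (self_mem_mulFiber B ∅))
  simpa using subset_mul_of_mem_mulFiber h1 hN

lemma fiberEntropy_empty (h1 : 1 ∈ B) : fiberEntropy B ∅ = 0 := by
  simp [fiberEntropy, mulFiber_empty h1]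

lemma fiberEntropy_le_ncard_mul (h1 : 1 ∈ B) (hB : B.Finite) (hW : W.Finite) :
    fiberEntropy B W ≤ (W * B).ncard := by
  have hWB := hW.mul hB
  calc fiberEntropy B W ≤ Real.logb 2 (𝒫 (W * B)).ncard :=
        logb_two_ncard_le_of_injOn (f := id)
          hWB.powerset (fun _ => subset_mul_of_mem_mulFiber h1) (injOn_id _)
    _ = (W * B).ncard := logb_two_ncard_powerset hWB

end MulOneClass

/-! ### Deleting separated points -/

section LeftCancelMonoid

variable {G : Type*} [LeftCancelMonoid G] {B D E N R W W' : Set G}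

lemma subset_sdiff_mul_of_pairwiseDisjoint (h1 : 1 ∈ B) (hE : E.PairwiseDisjoint (fun e => e • B))
    (hER : E ⊆ R * (B \ {1})) (hDE : D ⊆ E) : R ⊆ (R \ D) * B := by
  intro x hxR
  by_cases hxD : x ∈ D
  · obtain ⟨r, hr, b, ⟨hb, hb1⟩, hrb⟩ := hER (hDE hxD)
    have hrD : r ∉ D := by
      intro hrD
      have hrx : r = x := hE.elim_set (hDE hrD) (hDE hxD) x ⟨b, hb, hrb⟩ ⟨1, h1, mul_one x⟩
      exact hb1 (mul_eq_left.1 (hrb.trans hrx.symm))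
    exact ⟨r, ⟨hr, hrD⟩, b, hb, hrb⟩
  · exact ⟨x, ⟨hxR, hxD⟩, 1, h1, mul_one x⟩

lemma union_shell_sdiff_mem_mulFiber (h1 : 1 ∈ B) (hWW' : W * B * B ⊆ W')
    (hE : E.PairwiseDisjoint (fun e => e • B)) (hEB : E * B ⊆ W')
    (hER : E ⊆ (W' \ (W * B)) * (B \ {1})) (hN : N ∈ mulFiber B W) (hDE : D ⊆ E) :
    N ∪ (W' \ (W * B)) \ D ∈ mulFiber B W' := by
  have hWB : W * B ⊆ W' := (subset_mul_left _ h1).trans hWW'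
  have hNB : N * B = W * B := hN
  change (N ∪ _) * B = W' * B
  refine subset_antisymm (mul_subset_mul_right (union_subset
    ((subset_mul_of_mem_mulFiber h1 hN).trans hWB) (sdiff_subset.trans sdiff_subset))) ?_
  rw [union_mul, hNB]
  rintro _ ⟨y, hy, b, hb, rfl⟩
  beta_reduce
  by_cases hyW : y * b ∈ W * B
  · exact Or.inl hyW
  refine Or.inr ?_
  by_cases hyW' : y * b ∈ W'
  · exact subset_sdiff_mul_of_pairwiseDisjoint h1 hE hER hDE ⟨hyW', hyW⟩
  · have hyD : y ∉ D := fun h => hyW' (hEB (mul_mem_mul (hDE h) hb))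
    have hyWB : y ∉ W * B := fun h => hyW' (hWW' (mul_mem_mul h hb))
    exact mul_mem_mul ⟨⟨hy, hyWB⟩, hyD⟩ hb

/-- Elements of `mulFiber B W` lie in `W * B`, so `N` and `D` can be read off
`N ∪ (W' \ (W * B)) \ D`. -/
lemma fiberEntropy_add_ncard_le (h1 : 1 ∈ B) (hB : B.Finite) (hW' : W'.Finite)
    (hWW' : W * B * B ⊆ W') (hE : E.PairwiseDisjoint (fun e => e • B)) (hEB : E * B ⊆ W')
    (hdisj : Disjoint E (W * B)) (hER : E ⊆ (W' \ (W * B)) * (B \ {1})) :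
    fiberEntropy B W + E.ncard ≤ fiberEntropy B W' := by
  have hEW' : E ⊆ W' := (subset_mul_left _ h1).trans hEB
  have hW : W.Finite :=
    hW'.subset (((subset_mul_left _ h1).trans (subset_mul_left _ h1)).trans hWW')
  rw [fiberEntropy, ← logb_two_ncard_prod_powerset (finite_mulFiber h1 hB hW)
    ⟨W, self_mem_mulFiber B W⟩ (hW'.subset hEW')]
  refine logb_two_ncard_le_of_injOn (f := fun p => p.1 ∪ (W' \ (W * B)) \ p.2)
    (finite_mulFiber h1 hB hW')
    (fun p hp => union_shell_sdiff_mem_mulFiber h1 hWW' hE hEB hER hp.1 hp.2) ?_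
  rintro ⟨N₁, D₁⟩ ⟨hN₁, hD₁⟩ ⟨N₂, D₂⟩ ⟨hN₂, hD₂⟩ heq
  have hN₁ := subset_mul_of_mem_mulFiber h1 hN₁
  have hN₂ := subset_mul_of_mem_mulFiber h1 hN₂
  have hshell : E ⊆ W' \ (W * B) := subset_sdiff.2 ⟨hEW', hdisj⟩
  simp only [mem_powerset_iff] at hD₁ hD₂
  simp only [Prod.mk.injEq, Set.ext_iff, subset_def, mem_union, Set.mem_sdiff] at *
  constructor <;> intro x <;> grind

lemma fiberEntropy_le_of_mul_mul_subset (h1 : 1 ∈ B) (hB : B.Finite) (hW' : W'.Finite)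
    (hWW' : W * B * B ⊆ W') : fiberEntropy B W ≤ fiberEntropy B W' := by
  simpa using fiberEntropy_add_ncard_le (E := ∅) h1 hB hW' hWW' (by simp) (by simp) (by simp)
    (by simp)

end LeftCancelMonoid

section Group

variable {G : Type*} [Group G] {A B M N W W' X : Set G}

lemma exists_pairwiseDisjoint_smul_subset_mul_div (hB : B.Nonempty) (X : Set G) :
    ∃ E ⊆ X, E.PairwiseDisjoint (fun e => e • B) ∧ X ⊆ E * (B / B) := by
  obtain ⟨E, ⟨hEX, hE⟩, hmax⟩ :=
    zorn_subset {E | E ⊆ X ∧ E.PairwiseDisjoint (fun e => e • B)} fun c hc hchain =>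
      ⟨⋃₀ c, ⟨sUnion_subset fun s hs => (hc hs).1,
        (pairwiseDisjoint_sUnion hchain.directedOn).2 fun s hs => (hc hs).2⟩,
        fun s hs => subset_sUnion_of_mem hs⟩
  refine ⟨E, hEX, hE, fun x hx => ?_⟩
  by_cases hxE : x ∈ E
  · exact subset_mul_left E (one_mem_div_iff.2 (not_disjoint_iff_nonempty_inter.2 (by simpa))) hxE
  have hmeet : ∃ e ∈ E, ¬ Disjoint (x • B) (e • B) := by
    by_contra! hdisj
    exact hxE (hmax ⟨insert_subset hx hEX, hE.insert fun e he _ => hdisj e he⟩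
      (subset_insert x E) (mem_insert x E))
  obtain ⟨e, he, hmeet⟩ := hmeet
  obtain ⟨_, ⟨b, hb, rfl⟩, c, hc, hcb⟩ := not_disjoint_iff.1 hmeet
  exact ⟨e, he, c / b, div_mem_div hc hb, by simpa [← mul_div_assoc, div_eq_iff_eq_mul] using hcb⟩

lemma ncard_le_fiberEntropy_sub_mul (h1 : 1 ∈ B) (hB : B.Finite) (hW' : W'.Finite)
    (hWW' : W * B * B ⊆ W') (hXB : X * B ⊆ W') (hdisj : Disjoint X (W * B))
    (hXR : X ⊆ (W' \ (W * B)) * (B \ {1})) :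
    (X.ncard : ℝ) ≤ (fiberEntropy B W' - fiberEntropy B W) * (B / B).ncard := by
  obtain ⟨E, hEX, hE, hcover⟩ := exists_pairwiseDisjoint_smul_subset_mul_div ⟨1, h1⟩ X
  have hEfin : E.Finite := hW'.subset (hEX.trans ((subset_mul_left X h1).trans hXB))
  have hcard : X.ncard ≤ E.ncard * (B / B).ncard :=
    (ncard_le_ncard hcover (hEfin.mul (hB.div hB))).trans natCard_mul_le
  have hgain := fiberEntropy_add_ncard_le h1 hB hW' hWW' hE ((mul_subset_mul_right hEX).trans hXB)
    (hdisj.mono_left hEX) (hEX.trans hXR)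
  calc (X.ncard : ℝ) ≤ E.ncard * (B / B).ncard := by exact_mod_cast hcard
    _ ≤ (fiberEntropy B W' - fiberEntropy B W) * (B / B).ncard := by gcongr; linarith

lemma ncard_le_fiberEntropy_mul (h1 : 1 ∈ B) (hB : B.Finite) (hnt : B.Nontrivial)
    (hW : W.Finite) (hMW : M * (B / B) ⊆ W) :
    (M.ncard : ℝ) ≤ fiberEntropy B W * (B / B).ncard := by
  obtain ⟨b, hb, hb1⟩ := hnt.exists_ne 1
  have hMB : M * B ⊆ W := (mul_subset_mul_left (subset_div_left h1)).trans hMW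
  have hMR : M ⊆ W * (B \ {1}) := fun m hm =>
    ⟨m * (1 / b), hMW (mul_mem_mul hm (div_mem_div h1 hb)), b, ⟨hb, hb1⟩, by simp⟩
  simpa [fiberEntropy_empty h1] using ncard_le_fiberEntropy_sub_mul (W := ∅) h1 hB hW (by simp)
    hMB (by simp) (by simpa using hMR)

lemma ncard_shell_le (hA : 1 ∈ A) (hAB : A ⊆ B) (hB : B.Finite) (hW' : W'.Finite)
    (hWW' : W * B * A * A * B ⊆ W') :
    (((W * B * A * A) \ (W * B * A)).ncard : ℝ) ≤
      (fiberEntropy B W' - fiberEntropy B W) * (B / B).ncard := by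
  have hWB : W * B ⊆ W * B * A := subset_mul_left _ hA
  have hWBA : W * B * A ⊆ W * B * A * A := subset_mul_left _ hA
  have hWBAA : W * B * A * A ⊆ W' := (subset_mul_left _ (hAB hA)).trans hWW'
  refine ncard_le_fiberEntropy_sub_mul (hAB hA) hB hW'
    ((mul_subset_mul_right (hWB.trans hWBA)).trans hWW')
    ((mul_subset_mul_right sdiff_subset).trans hWW')
    (disjoint_sdiff_left.mono_right hWB) ?_
  rintro _ ⟨⟨y, hy, a, ha, rfl⟩, hya⟩
  have ha1 : a ≠ 1 := by
    rintro rfl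
    exact hya (by simpa using hy)
  exact mul_mem_mul ⟨hWBAA (hWBA hy), fun h => hya (mul_mem_mul h ha)⟩ ⟨hAB ha, ha1⟩

/-! ### Restricting solutions -/

lemma inter_union_sdiff_mem_mulFiber (hM : M ⊆ W) (hMW : M * (B / B) ⊆ W) (hWW' : W ⊆ W')
    (hN : N ∈ mulFiber B W') : N ∩ M ∪ W \ M ∈ mulFiber B W := by
  have hNB : N * B = W' * B := hN
  refine subset_antisymm
    (mul_subset_mul_right (union_subset (inter_subset_right.trans hM) sdiff_subset)) ?_
  rintro _ ⟨w, hw, b, hb, rfl⟩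
  by_cases hwM : w ∈ M
  · obtain ⟨n, hn, c, hc, hnc⟩ : w * b ∈ N * B := hNB ▸ mul_mem_mul (hWW' hw) hb
    have hnW : n ∈ W := by
      have hn' : n = w * (b / c) := by rw [← mul_div_assoc, eq_div_iff_mul_eq']; exact hnc
      exact hn' ▸ hMW (mul_mem_mul hwM (div_mem_div hb hc))
    refine ⟨n, ?_, c, hc, hnc⟩
    by_cases hnM : n ∈ M
    exacts [Or.inl ⟨hn, hnM⟩, Or.inr ⟨hnW, hnM⟩]
  · exact mul_mem_mul (Or.inr ⟨hw, hwM⟩) hb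

lemma fiberEntropy_le_add_ncard (h1 : 1 ∈ B) (hB : B.Finite) (hW' : W'.Finite)
    (hMW : M * (B / B) ⊆ W) (hWW' : W ⊆ W') :
    fiberEntropy B W' ≤ fiberEntropy B W + ((W' * B) \ M).ncard := by
  have hM : M ⊆ W := (subset_mul_left M (subset_div_left h1 h1)).trans hMW
  have hY : ((W' * B) \ M).Finite := (hW'.mul hB).sdiff
  have hfib : (mulFiber B W).Finite := finite_mulFiber h1 hB (hW'.subset hWW')
  rw [fiberEntropy, fiberEntropy,
    ← logb_two_ncard_prod_powerset hfib ⟨W, self_mem_mulFiber B W⟩ hY]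
  refine logb_two_ncard_le_of_injOn (f := fun N => (N ∩ M ∪ W \ M, N ∩ ((W' * B) \ M)))
    (hfib.prod hY.powerset)
    (fun N hN => ⟨inter_union_sdiff_mem_mulFiber hM hMW hWW' hN, inter_subset_right⟩) ?_
  intro N₁ hN₁ N₂ hN₂ heq
  have hN₁ := subset_mul_of_mem_mulFiber h1 hN₁
  have hN₂ := subset_mul_of_mem_mulFiber h1 hN₂
  simp only [Prod.mk.injEq, Set.ext_iff, subset_def, mem_union, mem_inter_iff, Set.mem_sdiff] at *
  grind

end Group

/-! ### Følner sequences -/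

lemma ncard_mul_sdiff_le_sum {G : Type*} [Mul G] (F : Set G) (K : Finset G) :
    ((F * K) \ F).ncard ≤ ∑ g ∈ K, ((· * g) '' F \ F).ncard := by
  have hcover : (F * K) \ F = ⋃ g ∈ K, ((· * g) '' F \ F) := by
    simp only [← iUnion_mul_right_image, iUnion_sdiff, Finset.mem_coe]
  exact hcover ▸ Finset.set_ncard_biUnion_le _ _

lemma ncard_image_mul_right_sdiff_le {G : Type*} [Semigroup G] {F : Set G} (hF : F.Finite)
    (g h : G) :
    ((· * (g * h)) '' F \ F).ncard ≤
      ((· * g) '' F \ F).ncard + ((· * h) '' F \ F).ncard := by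
  have hsub : (· * (g * h)) '' F \ F ⊆
      (· * h) '' ((· * g) '' F \ F) ∪ ((· * h) '' F \ F) := by
    rintro _ ⟨⟨f, hf, rfl⟩, hn⟩
    by_cases hg : f * g ∈ F
    · exact Or.inr ⟨⟨f * g, hg, mul_assoc f g h⟩, hn⟩
    · exact Or.inl ⟨f * g, ⟨⟨f, hf, rfl⟩, hg⟩, mul_assoc f g h⟩
  have hg : ((· * g) '' F \ F).Finite := (hF.image _).sdiff
  have hh : ((· * h) '' F \ F).Finite := (hF.image _).sdiff
  calc ((· * (g * h)) '' F \ F).ncard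
      ≤ ((· * h) '' ((· * g) '' F \ F) ∪ ((· * h) '' F \ F)).ncard :=
        ncard_le_ncard hsub ((hg.image _).union hh)
    _ ≤ ((· * h) '' ((· * g) '' F \ F)).ncard + ((· * h) '' F \ F).ncard := ncard_union_le _ _
    _ ≤ ((· * g) '' F \ F).ncard + ((· * h) '' F \ F).ncard :=
        Nat.add_le_add_right (ncard_image_le hg) _

section Group

variable {G : Type*} [Group G] {A B F P Q : Set G}

lemma IsRightFolnerSeq.tendsto_ncard_mul_sdiff_div {F : ℕ → Set G} (hF : IsRightFolnerSeq F)
    {K : Set G} (hK : K.Finite) :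
    Tendsto (fun n => (((F n * K) \ F n).ncard : ℝ) / (F n).ncard) atTop (nhds 0) := by
  lift K to Finset G using hK
  have hsum := tendsto_finsetSum K fun g _ => hF.2 g
  rw [Finset.sum_const_zero] at hsum
  refine squeeze_zero (fun n => by positivity) (fun n => ?_) hsum
  rw [← Finset.sum_div]
  gcongr
  exact_mod_cast ncard_mul_sdiff_le_sum (F n) K

lemma isRightFolnerSeq_of_posGen (hA : A.Finite) (hgen : PosGen A) {F : ℕ → Set G}
    (hF : ∀ n, (F n).Finite ∧ (F n).Nonempty)
    (hlim : Tendsto (fun n => (((F n * A) \ F n).ncard : ℝ) / (F n).ncard) atTop (nhds 0)) :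
    IsRightFolnerSeq F := by
  refine ⟨hF, fun g => ?_⟩
  obtain ⟨k, -, hg⟩ := hgen g
  induction k generalizing g with
  | zero =>
    obtain rfl : g = 1 := by simpa using hg
    simp
  | succ k ih =>
    obtain ⟨g, hg, a, ha, rfl⟩ := hg
    have hsum := (ih g hg).add hlim
    rw [add_zero] at hsum
    refine squeeze_zero (fun n => by positivity) (fun n => ?_) hsum
    have hFA : ((F n * A) \ F n).Finite := ((hF n).1.mul hA).sdiff
    have hsub : (· * a) '' F n ⊆ F n * A := image_subset_iff.2 fun f hf => mul_mem_mul hf ha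
    have hle : ((· * a) '' F n \ F n).ncard ≤ ((F n * A) \ F n).ncard :=
      ncard_le_ncard (sdiff_subset_sdiff_left hsub) hFA
    rw [← add_div]
    gcongr
    exact_mod_cast (ncard_image_mul_right_sdiff_le (hF n).1 g a).trans (Nat.add_le_add_left hle _)

lemma fiberEntropy_div_mem_Icc (h1 : 1 ∈ B) (hB : B.Finite) (hnt : B.Nontrivial) (hF : F.Finite)
    (hF' : F.Nonempty) (hQ : Q.Finite) (hP : B / B ⊆ P) (hPQ : P * B * B ⊆ Q) :
    fiberEntropy B (F * Q) / fiberEntropy B (F * P) ∈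
      Icc 1 (1 + (((F * (Q * B)) \ F).ncard : ℝ) / F.ncard * (B / B).ncard) := by
  have hPQ' : P ⊆ Q := ((subset_mul_left _ h1).trans (subset_mul_left _ h1)).trans hPQ
  have hFQ : (F * Q).Finite := hF.mul hQ
  have hmono : fiberEntropy B (F * P) ≤ fiberEntropy B (F * Q) :=
    fiberEntropy_le_of_mul_mul_subset h1 hB hFQ
      (by simpa only [mul_assoc] using mul_subset_mul_left (s := F) hPQ)
  have hupper : fiberEntropy B (F * Q) ≤ fiberEntropy B (F * P) + ((F * (Q * B)) \ F).ncard := by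
    simpa only [mul_assoc] using fiberEntropy_le_add_ncard h1 hB hFQ
      (mul_subset_mul_left hP) (mul_subset_mul_left hPQ')
  have hlower : (F.ncard : ℝ) ≤ fiberEntropy B (F * P) * (B / B).ncard :=
    ncard_le_fiberEntropy_mul h1 hB hnt (hF.mul (hQ.subset hPQ')) (mul_subset_mul_left hP)
  have hFpos : (0 : ℝ) < F.ncard := by exact_mod_cast hF'.ncard_pos hF
  have hpos : 0 < fiberEntropy B (F * P) :=
    pos_of_mul_pos_left (hFpos.trans_le hlower) (Nat.cast_nonneg _)
  refine ⟨(one_le_div hpos).2 hmono, (div_le_iff₀ hpos).2 ?_⟩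
  set δ : ℝ := ((F * (Q * B)) \ F).ncard / F.ncard
  calc fiberEntropy B (F * Q) ≤ fiberEntropy B (F * P) + ((F * (Q * B)) \ F).ncard := hupper
    _ = fiberEntropy B (F * P) + δ * F.ncard := by rw [div_mul_cancel₀ _ hFpos.ne']
    _ ≤ fiberEntropy B (F * P) + δ * (fiberEntropy B (F * P) * (B / B).ncard) := by gcongr
    _ = (1 + δ * (B / B).ncard) * fiberEntropy B (F * P) := by ring

lemma IsRightFolnerSeq.tendsto_fiberEntropy_div {F : ℕ → Set G} (hF : IsRightFolnerSeq F)
    (h1 : 1 ∈ B) (hB : B.Finite) (hnt : B.Nontrivial) (hQ : Q.Finite) (hP : B / B ⊆ P)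
    (hPQ : P * B * B ⊆ Q) :
    Tendsto (fun n => fiberEntropy B (F n * Q) / fiberEntropy B (F n * P)) atTop (nhds 1) := by
  have hbound n := fiberEntropy_div_mem_Icc h1 hB hnt (hF.1 n).1 (hF.1 n).2 hQ hP hPQ
  refine tendsto_of_tendsto_of_tendsto_of_le_of_le tendsto_const_nhds ?_
    (fun n => (hbound n).1) (fun n => (hbound n).2)
  simpa using ((hF.tendsto_ncard_mul_sdiff_div (hQ.mul hB)).mul_const
    ((B / B).ncard : ℝ)).const_add 1

lemma isRightFolnerSeq_of_tendsto_fiberEntropy_div (hA : 1 ∈ A) (hgen : PosGen A) (hAB : A ⊆ B)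
    (hB : B.Finite) {W W' : ℕ → Set G} (hW : ∀ n, (W n).Finite ∧ (W n).Nonempty)
    (hW' : ∀ n, (W' n).Finite) (hWW' : ∀ n, W n * B * A * A * B ⊆ W' n)
    (hlim : Tendsto (fun n => fiberEntropy B (W' n) / fiberEntropy B (W n)) atTop (nhds 1)) :
    IsRightFolnerSeq fun n => W n * B * A := by
  have hAfin : A.Finite := hB.subset hAB
  have hF n : (W n * B * A).Finite := ((hW n).1.mul hB).mul hAfin
  refine isRightFolnerSeq_of_posGen hAfin hgen
    (fun n => ⟨hF n, ((hW n).2.mul ⟨1, hAB hA⟩).mul ⟨1, hA⟩⟩) ?_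
  have hzero := (hlim.sub_const 1).mul_const ((B / B).ncard : ℝ)
  rw [sub_self, zero_mul] at hzero
  refine squeeze_zero' (Eventually.of_forall fun n => by positivity) ?_ hzero
  -- division by zero is zero, so a ratio near `1` has a nonzero denominator
  filter_upwards [hlim.eventually_ne one_ne_zero] with n hn
  have hpos : 0 < fiberEntropy B (W n) :=
    (fiberEntropy_nonneg B (W n)).lt_of_ne' (div_ne_zero_iff.1 hn).2
  have hle : fiberEntropy B (W n) ≤ (W n * B * A).ncard :=
    (fiberEntropy_le_ncard_mul (hAB hA) hB (hW n).1).trans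
      (by exact_mod_cast ncard_le_ncard (subset_mul_left _ hA) (hF n))
  have hshell := ncard_shell_le hA hAB hB (hW' n) (hWW' n)
  calc (((W n * B * A * A) \ (W n * B * A)).ncard : ℝ) / (W n * B * A).ncard
      ≤ (fiberEntropy B (W' n) - fiberEntropy B (W n)) * (B / B).ncard / fiberEntropy B (W n) :=
        div_le_div₀ ((Nat.cast_nonneg _).trans hshell) hshell hpos hle
    _ = (fiberEntropy B (W' n) / fiberEntropy B (W n) - 1) * (B / B).ncard := by
        rw [div_sub_one hpos.ne', div_mul_eq_mul_div]

end Group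

/-! ### Finitely generated groups -/

lemma finite_pow_s13 {G : Type*} [Monoid G] {A : Set G} (hA : A.Finite) (k : ℕ) : (A ^ k).Finite := by
  induction k with
  | zero => simp
  | succ k ih => exact pow_succ A k ▸ ih.mul hA

lemma one_le_of_inv_subset_pow {G : Type*} [DivisionMonoid G] {A : Set G} (hnt : A.Nontrivial)
    {q : ℕ} (hq : A⁻¹ ⊆ A ^ q) : 1 ≤ q := by
  rw [Nat.one_le_iff_ne_zero]
  rintro rfl
  obtain ⟨a, ha, ha1⟩ := hnt.exists_ne 1
  exact ha1 (by simpa using hq (inv_mem_inv.2 ha))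

section Group

variable {G : Type*} [Group G]

lemma LA_eq_fiberEntropy (A : Set G) (q : ℕ) (W : Set G) : LA A q W = fiberEntropy (A ^ q) W := rfl

lemma phiA_iterate (A M : Set G) (k : ℕ) : (phiA A)^[k] M = M * A ^ k :=
  congrFun (mul_right_iterate A k) M

lemma PosGen.nontrivial [Nontrivial G] {A : Set G} (hgen : PosGen A) (h1 : 1 ∈ A) :
    A.Nontrivial := by
  refine (nontrivial_iff_ne_singleton h1).2 fun hA => ?_
  obtain ⟨g, hg⟩ := exists_ne (1 : G)
  obtain ⟨n, -, hn⟩ := hgen g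
  rw [hA, singleton_one, one_pow] at hn
  exact hg hn

end Group

theorem amenable_iff_LA_ratio_tendsto_one_general {Γ : Type*} [Group Γ] [Nontrivial Γ]
    (A : Set Γ) (hfin : A.Finite) (hone : (1 : Γ) ∈ A) (hgen : PosGen A)
    (q s t : ℕ) (hq : 1 ≤ q) (hst : s + 2 * q + 2 ≤ t) :
    AmenableGroup Γ ↔
      ∃ M : ℕ → Set Γ, (∀ n, (M n).Finite ∧ (M n).Nonempty) ∧
        Tendsto (fun n => LA A q ((phiA A)^[t] (M n)) / LA A q ((phiA A)^[s] (M n)))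
          atTop (nhds 1) := by
  have hmono : Monotone (A ^ ·) := Set.pow_right_monotone hone
  have hB : (A ^ q).Finite := finite_pow_s13 hfin q
  have hAB : A ⊆ A ^ q := by simpa using hmono hq
  have h1B : 1 ∈ A ^ q := hAB hone
  simp only [LA_eq_fiberEntropy, phiA_iterate]
  constructor
  · rintro ⟨F, hF⟩
    refine ⟨fun n => F n * (A ^ q / A ^ q), fun n => ⟨(hF.1 n).1.mul (hB.div hB),
      (hF.1 n).2.mul ⟨1, subset_div_left h1B h1B⟩⟩, ?_⟩
    simp only [mul_assoc]
    refine hF.tendsto_fiberEntropy_div h1B hB ((hgen.nontrivial hone).mono hAB)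
      ((hB.div hB).mul (finite_pow_s13 hfin t)) (subset_mul_left _ (one_mem_pow hone)) ?_
    simp only [mul_assoc, ← pow_add]
    exact mul_subset_mul_left (hmono (by lia))
  · rintro ⟨M, hM, hlim⟩
    refine ⟨_, isRightFolnerSeq_of_tendsto_fiberEntropy_div hone hgen hAB hB
      (fun n => ⟨(hM n).1.mul (finite_pow_s13 hfin s), (hM n).2.mul ⟨1, one_mem_pow hone⟩⟩)
      (fun n => (hM n).1.mul (finite_pow_s13 hfin t)) (fun n => ?_) hlim⟩
    simp only [mul_assoc, ← pow_succ', ← pow_add]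
    exact mul_subset_mul_left (hmono (by lia))

/-- `Γ` is amenable iff there is a sequence of nonempty finite sets `M n` with
`L_A^q(φ_A^{(q+5)q}(M n)) / L_A^q(φ_A^{(q+1)q}(M n)) → 1`. -/
theorem amenable_iff_LA_ratio_tendsto_one {Γ : Type*} [Group Γ] [Countable Γ]
    [Infinite Γ]
    (A : Set Γ) (hfin : A.Finite) (hone : (1 : Γ) ∈ A) (hgen : PosGen A)
    (q : ℕ) (hq : A⁻¹ ⊆ A ^ q) :
    AmenableGroup Γ ↔
      ∃ M : ℕ → Set Γ, (∀ n, (M n).Finite ∧ (M n).Nonempty) ∧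
        Tendsto
          (fun n =>
            LA A q ((phiA A)^[(q + 5) * q] (M n)) /
              LA A q ((phiA A)^[(q + 1) * q] (M n)))
          atTop (nhds 1) := by
  have hq1 : 1 ≤ q := one_le_of_inv_subset_pow (hgen.nontrivial hone) hq
  exact amenable_iff_LA_ratio_tendsto_one_general A hfin hone hgen q _ _ hq1 (by lia)
end
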